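/- Let S = ℤ[X,Y] localized at the maximal ideal (3, X, Y), with fraction field L, and let f = −5X³ + 9 and g = −2Y³ + 9. Then f and g are square-free elements of S forming a regular sequence, the field K obtained from L by adjoining cube roots ω of f and μ of g satisfies [K : L] = 9, and the integral closure R of S in K is not a Cohen-Macaulay ring; moreover R has projective dimension exactly 1 as an S-module. -/

import Mathlib

/-- A height one prime ideal of a commutative ring. -/
def IsHeightOnePrime {S : Type*} [CommRing S] (P : Ideal S) : Prop :=
  ∃ hP : P.IsPrime, Order.height (⟨P, hP⟩ : PrimeSpectrum S) = 1

/-- `c ∈ S` is square free if `P S_P = c S_P` for every height one prime `P` containing `c`. -/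
def PaperSquarefree {S : Type*} [CommRing S] (c : S) : Prop :=
  ∀ (P : Ideal S) (hP : P.IsPrime), Order.height (⟨P, hP⟩ : PrimeSpectrum S) = 1 → c ∈ P →
    haveI := hP
    Ideal.map (algebraMap S (Localization.AtPrime P)) P =
      Ideal.span {algebraMap S (Localization.AtPrime P) c}

/-- Two elements satisfy `𝒜₁` if no height one prime contains both of them. -/
def SatisfiesA1 {S : Type*} [CommRing S] (f g : S) : Prop :=
  ∀ P : Ideal S, IsHeightOnePrime P → ¬(f ∈ P ∧ g ∈ P)

/-- The depth of a module over a local ring: the supremum of the lengths of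
regular sequences on `M` contained in the maximal ideal. -/
noncomputable def modDepth (S : Type*) [CommRing S] [IsLocalRing S]
    (M : Type*) [AddCommGroup M] [Module S M] : ℕ∞ :=
  sSup {n : ℕ∞ | ∃ rs : List S, (rs.length : ℕ∞) = n ∧
    (∀ r ∈ rs, r ∈ IsLocalRing.maximalIdeal S) ∧ RingTheory.Sequence.IsRegular M rs}

/-- A commutative ring is Cohen-Macaulay if each of its localizations at a prime
has depth equal to its Krull dimension. -/
def IsCMRing (R : Type*) [CommRing R] : Prop :=
  ∀ (Q : Ideal R) (hQ : Q.IsPrime),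
    haveI := hQ
    (modDepth (Localization.AtPrime Q) (Localization.AtPrime Q) : WithBot ℕ∞) =
      ringKrullDim (Localization.AtPrime Q)

/-- The `n`-th symbolic power of a prime ideal `P`, i.e. `Pⁿ A_P ∩ A`. -/
noncomputable def symbPow {A : Type*} [CommRing A] (P : Ideal A) (hP : P.IsPrime) (n : ℕ) :
    Ideal A :=
  haveI := hP
  Ideal.comap (algebraMap A (Localization.AtPrime P))
    (Ideal.map (algebraMap A (Localization.AtPrime P)) (P ^ n))

/-- `ω`, as an element of the subalgebra `A = S[ω,μ]`. -/
noncomputable def omegaA {S : Type*} [CommRing S] {K : Type*} [Field K] [Algebra S K]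
    (ω μ : K) : Algebra.adjoin S ({ω, μ} : Set K) :=
  ⟨ω, Algebra.subset_adjoin (Set.mem_insert _ _)⟩

/-- `μ`, as an element of the subalgebra `A = S[ω,μ]`. -/
noncomputable def muA {S : Type*} [CommRing S] {K : Type*} [Field K] [Algebra S K]
    (ω μ : K) : Algebra.adjoin S ({ω, μ} : Set K) :=
  ⟨μ, Algebra.subset_adjoin (Set.mem_insert_of_mem _ rfl)⟩

/-- The ideal `P = (p, ω−h₁, μ−h₂)` of `A = S[ω,μ]`. -/
noncomputable def Pid {S : Type*} [CommRing S] {K : Type*} [Field K] [Algebra S K]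
    (p : ℕ) (ω μ : K) (h₁ h₂ : S) : Ideal (Algebra.adjoin S ({ω, μ} : Set K)) :=
  Ideal.span {(p : Algebra.adjoin S ({ω, μ} : Set K)),
    omegaA ω μ - algebraMap S _ h₁, muA ω μ - algebraMap S _ h₂}

/-- The colon module `(A :_K N) = {x ∈ K : x·N ⊆ A}`, as an `S`-submodule of `K`. -/
noncomputable def colonSubmodule (S : Type*) [CommRing S] (K : Type*) [Field K] [Algebra S K]
    (A : Subalgebra S K) (N : Set K) : Submodule S K where
  carrier := {x : K | ∀ z ∈ N, x * z ∈ A}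
  add_mem' := fun hx hy z hz => by
    simpa [add_mul] using add_mem (hx z hz) (hy z hz)
  zero_mem' := fun z hz => by simpa using A.zero_mem
  smul_mem' := fun c x hx z hz => by
    rw [Algebra.smul_def, mul_assoc]
    exact mul_mem (A.algebraMap_mem c) (hx z hz)

/-- `M` admits a free resolution `0 → Sⁿ → Sᵐ → M → 0`; for a finitely generated
module over a Noetherian local ring this says exactly `pd_S(M) ≤ 1`. -/
def HasFreeResLengthLE1 (S : Type*) [CommRing S] (M : Type*) [AddCommGroup M] [Module S M] :
    Prop :=
  ∃ (n m : ℕ) (φ : (Fin n → S) →ₗ[S] (Fin m → S)) (ψ : (Fin m → S) →ₗ[S] M),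
    Function.Injective φ ∧ Function.Surjective ψ ∧ LinearMap.range φ = LinearMap.ker ψ

/-- The ideal `Q` contains an `S`-regular sequence of length three, i.e. `Q` has grade
(at least) three. -/
def ContainsRegSeq3 (S : Type*) [CommRing S] (Q : Ideal S) : Prop :=
  ∃ rs : List S, rs.length = 3 ∧ (∀ r ∈ rs, r ∈ Q) ∧ RingTheory.Sequence.IsRegular S rs

/-- The maximal ideal `(3, X, Y)` of `ℤ[X,Y]`. -/
noncomputable def mvIdeal : Ideal (MvPolynomial (Fin 2) ℤ) :=
  Ideal.span {3, MvPolynomial.X 0, MvPolynomial.X 1}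

/-!
Write `f = x ^ 3 + 3 * α`, `g = y ^ 3 + 3 * β`, `u = ω - x` and `v = μ - y`. The integral closure
`R` is generated over `S` by ten elements `1, u, v, u ^ 2, u * v, v ^ 2, p, q, r, σ`, subject to the
single relation `3 * σ = (y * u + x * v) ^ 2`. To see that their span `N` is all of `R`, one uses a
submodule of `N` which contains `f * S[ω, μ]` and is saturated with respect to `3`, because `R` has
two primes over `3`, told apart by the element `τ`. As `9 * R ⊆ S[ω, μ] ⊆ N`, this gives
`f * R ⊆ N`; the relation has a coefficient `-y ^ 2` outside the prime `(3, x)`, so `3, f` is a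
weakly regular sequence on `N` and `9 * R ⊆ N` improves to `R ⊆ N`. All the coefficients lie in
`(3, x, y)`, so the resolution `0 → S → S ^ 10 → R → 0` is minimal and the projective dimension is
exactly `1`.

The same relation gives `3 * σ ≡ y ^ 2 * u ^ 2` modulo `x`, so `y` annihilates the class of
`y * u ^ 2` in `R / (3, x)`. The full annihilator of this class is a prime over `(3, x, y)`, hence
an associated prime of height at least `3` of the quotient of `R` by a regular sequence of length
`2`, which cannot exist in a Cohen-Macaulay ring by Rees' description of depth in terms of `Ext`.
-/

section RegularSequences

open CategoryTheory Abelian RingTheory.Sequence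

universe u

theorem isWeaklyRegular_pair {A : Type*} [CommRing A] [IsDomain A] {a b : A} (ha : a ≠ 0)
    (hb : ∀ c, a ∣ b * c → a ∣ c) : IsWeaklyRegular A [a, b] := by
  rw [isWeaklyRegular_cons_iff,
    isWeaklyRegular_singleton_iff]
  refine ⟨IsRegular.of_ne_zero ha |>.left.isSMulRegular, ?_⟩
  refine (isSMulRegular_quotient_iff_mem_of_smul_mem _ b).2 fun c hc ↦ ?_
  rw [← Submodule.ideal_span_singleton_smul, smul_eq_mul, Ideal.mul_top,
    Ideal.mem_span_singleton] at hc ⊢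
  exact hb c hc

theorem isRegular_pair_of_prime {A : Type*} [CommRing A] [IsDomain A] {a b : A} (ha : Prime a)
    (hab : ¬a ∣ b) (htop : Ideal.span {a, b} ≠ ⊤) : IsRegular A [a, b] := by
  refine ⟨isWeaklyRegular_pair ha.ne_zero fun c h ↦ (ha.dvd_or_dvd h).resolve_left hab,
    fun h ↦ htop ?_⟩
  rw [Ideal.ofList_cons, Ideal.ofList_singleton, smul_eq_mul, Ideal.mul_top] at h
  rw [Ideal.span_insert, ← h]

theorem subsingleton_linearMap_quotient_ofList_smul_top {R : Type u} [CommRing R]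
    (N : ModuleCat.{u} R) {rs : List R} (M : ModuleCat.{u} R) (hrs : IsWeaklyRegular M rs)
    (hExt : ∀ i ≤ rs.length, Subsingleton (Ext N M i)) :
    Subsingleton (N →ₗ[R] M ⧸ (Ideal.ofList rs • ⊤ : Submodule R M)) := by
  induction rs generalizing M with
  | nil =>
    have hHom : Subsingleton (N →ₗ[R] M) :=
      (Ext.addEquiv₀.trans ModuleCat.homAddEquiv).symm.subsingleton_congr.mpr (hExt 0 le_rfl)
    have e : (M ⧸ (Ideal.ofList [] • ⊤ : Submodule R M)) ≃ₗ[R] M :=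
      Submodule.quotEquivOfEqBot _ <|
      (congrArg (· • ⊤) Ideal.ofList_nil).trans (Submodule.bot_smul ⊤)
    exact (LinearEquiv.congrRight (M := N) e).toEquiv.subsingleton
  | cons r rs ih =>
    obtain ⟨hr, hrs⟩ := (isWeaklyRegular_cons_iff M r rs).1 hrs
    have hExt' : ∀ i ≤ rs.length, Subsingleton (Ext N (ModuleCat.of R (QuotSMulTop r M)) i) :=
      fun i hi ↦ AddCommGrpCat.subsingleton_of_isZero <| ShortComplex.Exact.isZero_of_both_zeros
        (Ext.covariant_sequence_exact₃' N hr.smulShortComplex_shortExact i (i + 1) rfl)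
        ((AddCommGrpCat.isZero_of_iff_subsingleton.mpr
          (hExt i (by simp; omega))).eq_zero_of_src _)
        ((AddCommGrpCat.isZero_of_iff_subsingleton.mpr
          (hExt (i + 1) (by simpa using hi))).eq_zero_of_tgt _)
    have := ih (ModuleCat.of R (QuotSMulTop r M)) hrs hExt'
    exact (LinearEquiv.congrRight (M := N)
      (Submodule.quotOfListConsSMulTopEquivQuotSMulTopInner M r rs)).toEquiv.subsingleton

theorem length_le_length_of_maximalIdeal_mem_associatedPrimes {R : Type u} [CommRing R]
    [IsNoetherianRing R] [IsLocalRing R] {M : Type u} [AddCommGroup M] [Module R M]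
    [Module.Finite R M] {rs xs : List R} (hrs : IsWeaklyRegular M rs)
    (hass : IsLocalRing.maximalIdeal R ∈
      associatedPrimes R (M ⧸ (Ideal.ofList rs • ⊤ : Submodule R M)))
    (hxs : IsRegular M xs) (hmem : ∀ x ∈ xs, x ∈ IsLocalRing.maximalIdeal R) :
    xs.length ≤ rs.length := by
  by_contra! hlt
  have hnt : Nontrivial M := hxs.nontrivial
  have hsupp : Module.support R (R ⧸ IsLocalRing.maximalIdeal R) ⊆
      PrimeSpectrum.zeroLocus (IsLocalRing.maximalIdeal R) := by
    rw [Module.support_eq_zeroLocus, Ideal.annihilator_quotient]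
  have hExt := ModuleCat.subsingleton_ext_of_exists_isRegular (IsLocalRing.maximalIdeal R)
    (ModuleCat.of R (R ⧸ IsLocalRing.maximalIdeal R)) hsupp (ModuleCat.of R M)
    (Submodule.top_ne_ideal_smul_of_le_jacobson_annihilator
      (IsLocalRing.maximalIdeal_le_jacobson _)).symm.lt_top xs hmem hxs
  have hHom := subsingleton_linearMap_quotient_ofList_smul_top _ (ModuleCat.of R M) hrs
    fun i hi ↦ hExt i (hi.trans_lt hlt)
  obtain ⟨-, φ, hφ⟩ := (isAssociatedPrime_iff_exists_injective_linearMap _ _).1 hass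
  have hφ0 : φ = 0 := hHom.elim φ 0
  exact one_ne_zero (α := R ⧸ IsLocalRing.maximalIdeal R) (hφ (by simp [hφ0]))

theorem modDepth_le_length {R : Type u} [CommRing R]
    [IsNoetherianRing R] [IsLocalRing R] {M : Type u} [AddCommGroup M] [Module R M]
    [Module.Finite R M] {rs : List R} (hrs : IsWeaklyRegular M rs)
    (hass : IsLocalRing.maximalIdeal R ∈
      associatedPrimes R (M ⧸ (Ideal.ofList rs • ⊤ : Submodule R M))) :
    modDepth R M ≤ rs.length := by
  refine sSup_le ?_
  rintro _ ⟨xs, rfl, hmem, hxs⟩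
  exact_mod_cast length_le_length_of_maximalIdeal_mem_associatedPrimes hrs hass hxs hmem

theorem maximalIdeal_mem_associatedPrimes_quotient_map {R : Type*} [CommRing R]
    {I Q : Ideal R} [Q.IsPrime] (hass : Q ∈ associatedPrimes R (R ⧸ I)) :
    IsLocalRing.maximalIdeal (Localization.AtPrime Q) ∈ associatedPrimes (Localization.AtPrime Q)
      (Localization.AtPrime Q ⧸ I.map (algebraMap R (Localization.AtPrime Q))) := by
  rw [← Ideal.localized'_eq_map (Localization.AtPrime Q) Q.primeCompl]
  refine
    Module.associatedPrimes.mem_associatedPrimes_of_comap_mem_associatedPrimes_of_isLocalizedModule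
    Q.primeCompl (Submodule.toLocalizedQuotient' (Localization.AtPrime Q) Q.primeCompl
      (Algebra.linearMap R (Localization.AtPrime Q)) I) _ ?_
  rwa [← Ideal.under_def, Localization.AtPrime.under_maximalIdeal]

theorem not_isCMRing_of_mem_associatedPrimes {R : Type*} [CommRing R] [IsNoetherianRing R]
    {rs : List R} {Q : Ideal R} (hrs : IsWeaklyRegular R rs)
    (hass : Q ∈ associatedPrimes R (R ⧸ Ideal.ofList rs)) (hht : rs.length < Q.height) :
    ¬ IsCMRing R := by
  intro hCM
  have hQ : Q.IsPrime := hass.isPrime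
  have hloc := hrs.of_isLocalization (Localization.AtPrime Q) Q.primeCompl
  have hdepth := modDepth_le_length hloc (by
    rw [smul_eq_mul, Ideal.mul_top, ← Ideal.map_ofList]
    exact maximalIdeal_mem_associatedPrimes_quotient_map hass)
  have hdim := hCM Q hQ
  rw [IsLocalization.AtPrime.ringKrullDim_eq_height Q] at hdim
  rw [List.length_map] at hdepth
  exact (hdepth.trans_lt hht).ne (WithBot.coe_injective hdim)

end RegularSequences

section OneRelation

variable {S ι M : Type*} [CommRing S] [AddCommGroup M] [Module S M]
  {φ : (ι → S) →ₗ[S] M} {ρ : ι → S}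

theorem exists_eq_smul_of_smul_eq_smul (hφ : Function.Surjective φ)
    (hker : LinearMap.ker φ = Submodule.span S {ρ}) {p x : S} (hp : Prime p) (hx : ¬p ∣ x)
    (hprime : (Ideal.span {p, x}).IsPrime) {i : ι} (hi : ρ i ∉ Ideal.span {p, x}) {a b : M}
    (h : x • a = p • b) : ∃ c, a = p • c := by
  obtain ⟨m, rfl⟩ := hφ a
  obtain ⟨n, rfl⟩ := hφ b
  have hmem : x • m - p • n ∈ LinearMap.ker φ := by simp [h]
  rw [hker, Submodule.mem_span_singleton] at hmem
  obtain ⟨d, hd⟩ := hmem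
  replace hd (j : ι) : d * ρ j = x * m j - p * n j := congrFun hd j
  have hdmem : d ∈ Ideal.span {p, x} := by
    refine (hprime.mem_or_mem ?_).resolve_right hi
    exact Ideal.mem_span_pair.2 ⟨-n i, m i, by linear_combination -hd i⟩
  obtain ⟨k, l, rfl⟩ := Ideal.mem_span_pair.1 hdmem
  have hdvd (j : ι) : p ∣ m j - l * ρ j :=
    (hp.dvd_or_dvd ⟨k * ρ j + n j, by linear_combination -hd j⟩).resolve_left hx
  choose m' hm' using hdvd
  have hm : m = p • m' + l • ρ := by
    ext j
    simp only [Pi.add_apply, Pi.smul_apply, smul_eq_mul]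
    linear_combination hm' j
  have hρ : φ ρ = 0 := LinearMap.mem_ker.1 (hker ▸ Submodule.mem_span_singleton_self ρ)
  exact ⟨φ m', by rw [hm, map_add, map_smul, map_smul, hρ, smul_zero, add_zero]⟩

theorem exists_eq_smul_of_pow_smul_eq_smul (hφ : Function.Surjective φ)
    (hker : LinearMap.ker φ = Submodule.span S {ρ}) {p x : S} (hp : Prime p) (hx : ¬p ∣ x)
    (hprime : (Ideal.span {p, x}).IsPrime) {i : ι} (hi : ρ i ∉ Ideal.span {p, x}) (n : ℕ) {a b : M}
    (h : x ^ n • a = p • b) : ∃ c, a = p • c := by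
  induction n generalizing a b with
  | zero => exact ⟨b, by simpa using h⟩
  | succ n ih =>
    obtain ⟨c, hc⟩ := ih (a := x • a) (by rw [← mul_smul, ← pow_succ, h])
    exact exists_eq_smul_of_smul_eq_smul hφ hker hp hx hprime hi hc

theorem not_projective_of_ker_eq_span_singleton [IsDomain S] [Finite ι]
    (hφ : Function.Surjective φ) (hker : LinearMap.ker φ = Submodule.span S {ρ}) (hρ : ρ ≠ 0)
    {I : Ideal S} (hI : I ≠ ⊤) (hρI : ∀ i, ρ i ∈ I) : ¬Module.Projective S M := by
  classical
  have := Fintype.ofFinite ι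
  intro hproj
  obtain ⟨s, hs⟩ := Module.projective_lifting_property φ LinearMap.id hφ
  set T : (ι → S) →ₗ[S] (ι → S) := LinearMap.id - s ∘ₗ φ with hT
  have hTmem (v : ι → S) : T v ∈ Submodule.span S {ρ} := by
    rw [← hker, LinearMap.mem_ker, ← LinearMap.comp_apply, hT, LinearMap.comp_sub,
      ← LinearMap.comp_assoc, hs, LinearMap.comp_id, LinearMap.id_comp, sub_self,
      LinearMap.zero_apply]
  choose ℓ hℓ using fun v ↦ Submodule.mem_span_singleton.1 (hTmem v)
  have hφρ : φ ρ = 0 := LinearMap.mem_ker.1 (hker ▸ Submodule.mem_span_singleton_self ρ)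
  have hTρ : T ρ = ρ := by simp [hT, hφρ]
  have hsum : (∑ i, ρ i * ℓ fun j ↦ if i = j then 1 else 0) • ρ = (1 : S) • ρ := by
    conv_rhs => rw [one_smul, ← hTρ, LinearMap.pi_apply_eq_sum_univ T ρ]
    simp_rw [Finset.sum_smul, mul_smul, hℓ]
  refine hI ((Ideal.eq_top_iff_one I).2 ?_)
  rw [← smul_left_injective S hρ hsum]
  exact Ideal.sum_mem _ fun i _ ↦ I.mul_mem_right _ (hρI i)

theorem hasFreeResLengthLE1_of_ker_eq_span_singleton [IsDomain S] {n : ℕ}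
    {φ : (Fin n → S) →ₗ[S] M} {ρ : Fin n → S} (hφ : Function.Surjective φ)
    (hker : LinearMap.ker φ = Submodule.span S {ρ}) (hρ : ρ ≠ 0) : HasFreeResLengthLE1 S M := by
  let e := LinearEquiv.funUnique (Fin 1) S S
  refine ⟨1, n, LinearMap.toSpanSingleton S (Fin n → S) ρ ∘ₗ e, φ, ?_, hφ, ?_⟩
  · exact (smul_left_injective S hρ).comp e.injective
  · rw [LinearMap.range_comp, LinearEquiv.range, Submodule.map_top,
      LinearMap.range_toSpanSingleton, hker]

end OneRelation

section PureExtensions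

open Polynomial IntermediateField

section PurePowers

variable {S L : Type*} [CommRing S] [IsIntegrallyClosed S] [Field L] [Algebra S L]
  [IsFractionRing S L]

theorem exists_algebraMap_eq_of_pow_eq {n : ℕ} (hn : n ≠ 0) {b : L} {s : S}
    (h : b ^ n = algebraMap S L s) : ∃ t : S, algebraMap S L t = b ∧ t ^ n = s := by
  obtain ⟨t, rfl⟩ := IsIntegrallyClosed.exists_algebraMap_eq_of_isIntegral_pow hn.bot_lt
    (h ▸ isIntegral_algebraMap : IsIntegral S (b ^ n))
  exact ⟨t, rfl, IsFractionRing.injective S L (by rw [map_pow, h])⟩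

theorem pow_ne_algebraMap_mul_of_prime [IsDomain S] {n : ℕ} (hn : 2 ≤ n) {p s : S} (hp : Prime p)
    (hs : ¬p ∣ s) (b : L) : b ^ n ≠ algebraMap S L (p * s) := by
  intro h
  obtain ⟨t, -, ht⟩ := exists_algebraMap_eq_of_pow_eq (by omega) h
  obtain ⟨r, rfl⟩ := hp.dvd_of_dvd_pow (show p ∣ t ^ n from ⟨s, ht⟩)
  obtain ⟨m, rfl⟩ := Nat.exists_eq_add_of_le' hn
  exact hs ⟨p ^ m * r ^ (m + 2), mul_left_cancel₀ hp.ne_zero (by rw [← ht]; ring)⟩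

theorem exists_algebraMap_eq_of_pow_mul_prime_pow_eq {n i : ℕ} (hi : i < n) {p : S} (hp : Prime p)
    {c : L} {s : S} (h : c ^ n * algebraMap S L p ^ i = algebraMap S L s) :
    ∃ t : S, algebraMap S L t = c := by
  obtain ⟨k, rfl⟩ := Nat.exists_eq_add_of_lt hi
  have hpow : (c * algebraMap S L p) ^ (i + k + 1) = algebraMap S L (s * p ^ (k + 1)) := by
    rw [map_mul, map_pow, ← h]
    ring
  obtain ⟨t, ht, hts⟩ := exists_algebraMap_eq_of_pow_eq (by omega) hpow
  obtain ⟨r, rfl⟩ := hp.dvd_of_dvd_pow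
    (show p ∣ t ^ (i + k + 1) from ⟨s * p ^ k, by rw [hts]; ring⟩)
  refine ⟨r, mul_right_cancel₀ (IsFractionRing.to_map_eq_zero_iff.not.2 hp.ne_zero) ?_⟩
  rw [← ht, map_mul, mul_comm]

theorem exists_algebraMap_eq_of_pow_mul_prime_pow_mul_prime_pow_eq {n i j : ℕ}
    (hi : i < n) (hj : j < n) {p q : S} (hp : Prime p) (hq : Prime q) (hqp : ¬q ∣ p) {c : L} {s : S}
    (h : c ^ n * algebraMap S L p ^ i * algebraMap S L q ^ j = algebraMap S L s) :
    ∃ t : S, algebraMap S L t = c := by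
  obtain ⟨k, rfl⟩ := Nat.exists_eq_add_of_lt hi
  obtain ⟨l, hl⟩ := Nat.exists_eq_add_of_lt hj
  obtain ⟨t, ht⟩ := exists_algebraMap_eq_of_pow_mul_prime_pow_eq hi hp
    (c := c * algebraMap S L q) (s := s * q ^ (l + 1)) (by
      rw [map_mul, ← h, mul_pow, map_pow]
      nth_rw 2 [hl]
      ring)
  obtain ⟨t', ht'⟩ := exists_algebraMap_eq_of_pow_mul_prime_pow_eq hj hq
    (c := c * algebraMap S L p) (s := s * p ^ (k + 1)) (by
      rw [map_mul, ← h, mul_pow, map_pow]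
      ring)
  have hcross : t * p = q * t' := IsFractionRing.injective S L (by
    rw [map_mul, map_mul, ht, ht']; ring)
  obtain ⟨r, rfl⟩ := (hq.dvd_or_dvd ⟨t', hcross⟩).resolve_right hqp
  refine ⟨r, mul_right_cancel₀ (IsFractionRing.to_map_eq_zero_iff.not.2 hq.ne_zero) ?_⟩
  rw [← ht, map_mul, mul_comm]

end PurePowers

section RadicalExtensions

variable {E K : Type*} [Field E] [Field K] [Algebra E K] {n : ℕ} {e : E} {α : K}

theorem minpoly_eq_X_pow_sub_C (hn : n ≠ 0) (hirr : Irreducible (X ^ n - C e))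
    (hα : α ^ n = algebraMap E K e) : minpoly E α = X ^ n - C e :=
  (minpoly.eq_of_irreducible_of_monic hirr (by simp [hα]) (monic_X_pow_sub_C e hn)).symm

theorem trace_eq_zero_of_pow_eq [FiniteDimensional E K] (hn : 2 ≤ n)
    (hirr : Irreducible (X ^ n - C e)) (hα : α ^ n = algebraMap E K e) :
    Algebra.trace E K α = 0 := by
  have hdeg : (X ^ n - C e).natDegree = n := natDegree_X_pow_sub_C
  rw [trace_eq_finrank_mul_minpoly_nextCoeff, minpoly_eq_X_pow_sub_C (by omega) hirr hα,
    nextCoeff_of_natDegree_pos (by omega), hdeg, coeff_sub, coeff_X_pow, coeff_C,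
    if_neg (by omega), if_neg (by omega), sub_zero, neg_zero, mul_zero]

theorem sum_pow_mul_pow_eq_ite {R : Type*} [CommRing R] [IsDomain R] {ζ : R}
    (hζ : IsPrimitiveRoot ζ n) (i j : Fin n) :
    ∑ k ∈ Finset.range n, (ζ ^ (n - (j : ℕ))) ^ k * (ζ ^ k) ^ (i : ℕ) =
      if i = j then (n : R) else 0 := by
  have hterm (k : ℕ) : (ζ ^ (n - (j : ℕ))) ^ k * (ζ ^ k) ^ (i : ℕ) = (ζ ^ (n - j + i : ℕ)) ^ k := by
    ring
  simp_rw [hterm]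
  split_ifs with hij
  · rw [hij, Nat.sub_add_cancel j.2.le, hζ.pow_eq_one]
    simp
  · have hne : 1 - ζ ^ (n - j + i : ℕ) ≠ 0 := by
      rw [sub_ne_zero, ne_comm, Ne, hζ.pow_eq_one_iff_dvd]
      rintro ⟨m, hm⟩
      have h1 : m < 2 := by
        by_contra! h
        have := Nat.mul_le_mul_left n h
        omega
      have := j.2
      have := i.2
      interval_cases m <;> omega
    refine (mul_eq_zero.1 ?_).resolve_left hne
    rw [mul_neg_geom_sum, ← pow_mul, mul_comm _ n, pow_mul, hζ.pow_eq_one, one_pow, sub_self]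

theorem sum_pow_mul_sum_smul_mul_pow {R Ω : Type*} [CommRing R] [CommRing Ω] [IsDomain Ω]
    [Algebra R Ω] {ζ : Ω} (hζ : IsPrimitiveRoot ζ n) (c : Fin n → R) (a : Ω) (j : Fin n) :
    ∑ k ∈ Finset.range n, (ζ ^ (n - (j : ℕ))) ^ k * ∑ i : Fin n, c i • (ζ ^ k * a) ^ (i : ℕ) =
      (n : Ω) * c j • a ^ (j : ℕ) := by
  have hterm (i : Fin n) :
      ∑ k ∈ Finset.range n, (ζ ^ (n - (j : ℕ))) ^ k * c i • (ζ ^ k * a) ^ (i : ℕ) =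
        (if i = j then (n : Ω) else 0) * c i • a ^ (i : ℕ) := by
    rw [← sum_pow_mul_pow_eq_ite hζ, Finset.sum_mul]
    refine Finset.sum_congr rfl fun k _ ↦ ?_
    rw [mul_pow, mul_smul_comm, mul_smul_comm, mul_assoc]
  simp_rw [Finset.mul_sum]
  rw [Finset.sum_comm]
  simp_rw [hterm]
  simp

/- The conjugates of `α` are its multiples by the `n`-th roots of unity, so averaging the conjugates
of `∑ i, c i • α ^ i` against a character of that group isolates a single summand. -/
theorem isIntegral_natCast_mul_smul_pow {S : Type*} [CommRing S] [Algebra S E] [Algebra S K]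
    [IsScalarTower S E K] (hirr : Irreducible (X ^ n - C e)) (hα : α ^ n = algebraMap E K e)
    {c : Fin n → E} (h : IsIntegral S (∑ i, c i • α ^ (i : ℕ))) (j : Fin n) :
    IsIntegral S ((n : K) * c j • α ^ (j : ℕ)) := by
  have : NeZero n := ⟨(Nat.zero_lt_of_lt j.2).ne'⟩
  by_cases hn : (n : K) = 0
  · rw [hn, zero_mul]
    exact isIntegral_zero
  let Ω := AlgebraicClosure K
  have : NeZero (n : Ω) := ⟨by simpa using (map_ne_zero (algebraMap K Ω)).2 hn⟩
  obtain ⟨ζ, hζ⟩ := HasEnoughRootsOfUnity.exists_primitiveRoot Ω n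
  have hζint (k : ℕ) : IsIntegral S (ζ ^ k) :=
    .pow (.of_pow (NeZero.pos n) (hζ.pow_eq_one.symm ▸ isIntegral_one)) k
  have : Fact (Irreducible (X ^ n - C e)) := ⟨hirr⟩
  let ι : AdjoinRoot (X ^ n - C e) →ₐ[E] K := AdjoinRoot.liftAlgHom _ (Algebra.ofId E K) α (by
    simp [hα])
  let σ (k : ℕ) : AdjoinRoot (X ^ n - C e) →ₐ[E] Ω :=
    AdjoinRoot.liftAlgHom _ (Algebra.ofId E Ω) (ζ ^ k * algebraMap K Ω α) (by
      have hζk : (ζ ^ k) ^ n = 1 := by rw [pow_right_comm, hζ.pow_eq_one, one_pow]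
      simp [mul_pow, hζk, ← map_pow, hα, ← IsScalarTower.algebraMap_apply])
  have hroot : IsIntegral S (∑ i, c i • AdjoinRoot.root (X ^ n - C e) ^ (i : ℕ)) := by
    refine (isIntegral_algHom_iff (ι.restrictScalars S) ι.toRingHom.injective).1 ?_
    simpa [ι] using h
  have hconj (k : ℕ) :
      IsIntegral S (∑ i : Fin n, c i • (ζ ^ k * algebraMap K Ω α) ^ (i : ℕ)) := by
    simpa [σ] using hroot.map ((σ k).restrictScalars S)
  refine (isIntegral_algebraMap_iff (algebraMap K Ω).injective).1 ?_
  have hsum : algebraMap K Ω ((n : K) * c j • α ^ (j : ℕ)) =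
      (n : Ω) * c j • algebraMap K Ω α ^ (j : ℕ) := by
    simp [Algebra.smul_def, ← IsScalarTower.algebraMap_apply]
  rw [hsum, ← sum_pow_mul_sum_smul_mul_pow hζ c]
  exact IsIntegral.sum _ fun k _ ↦ ((hζint _).pow k).mul (hconj k)

theorem exists_basis_sub_pow (hn : n ≠ 0) (hirr : Irreducible (X ^ n - C e))
    (hα : α ^ n = algebraMap E K e) (hgen : Algebra.adjoin E {α} = ⊤) (a : E) :
    ∃ b : Module.Basis (Fin n) E K, ∀ i, b i = (α - algebraMap E K a) ^ (i : ℕ) := by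
  have hint : IsIntegral E (α - algebraMap E K a) :=
    .sub (.of_pow hn.bot_lt (hα ▸ isIntegral_algebraMap)) isIntegral_algebraMap
  have hgen' : Algebra.adjoin E {α - algebraMap E K a} = ⊤ := by
    refine top_le_iff.1 (hgen ▸ Algebra.adjoin_le (Set.singleton_subset_iff.2 ?_))
    simpa using add_mem (Algebra.self_mem_adjoin_singleton E (α - algebraMap E K a))
      (algebraMap_mem _ a)
  let pb := PowerBasis.ofAdjoinEqTop hint hgen'
  have hdim : pb.dim = n := by
    rw [← pb.natDegree_minpoly, PowerBasis.ofAdjoinEqTop_gen, minpoly.sub_algebraMap,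
      minpoly_eq_X_pow_sub_C hn hirr hα, natDegree_comp, natDegree_X_add_C, mul_one,
      natDegree_X_pow_sub_C]
  refine ⟨pb.basis.reindex (finCongr hdim), fun i ↦ ?_⟩
  rw [Module.Basis.reindex_apply, pb.basis_eq_pow, PowerBasis.ofAdjoinEqTop_gen]
  rfl

theorem pow_three_ne_sq (h : ∀ b : E, b ^ 3 ≠ e) (b : E) : b ^ 3 ≠ e ^ 2 := by
  intro hb
  have he : e ≠ 0 := fun he ↦ h 0 (by rw [he, zero_pow three_ne_zero])
  exact h (e / b) (by rw [div_pow, hb]; field_simp)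

theorem trace_eq_zero_of_pow_three_eq [FiniteDimensional E K] (h : ∀ b : E, b ^ 3 ≠ e)
    (hα : α ^ 3 = algebraMap E K e) : Algebra.trace E K α = 0 :=
  trace_eq_zero_of_pow_eq (by norm_num) (X_pow_sub_C_irreducible_of_prime Nat.prime_three h) hα

theorem trace_sq_eq_zero_of_pow_three_eq [FiniteDimensional E K] (h : ∀ b : E, b ^ 3 ≠ e)
    (hα : α ^ 3 = algebraMap E K e) : Algebra.trace E K (α ^ 2) = 0 :=
  trace_eq_zero_of_pow_three_eq (pow_three_ne_sq h) (by rw [pow_right_comm, hα, map_pow])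

/- A cube root of a non-cube has trace zero, and so has its square; for `β` this leaves only one
nonzero coordinate with respect to `1, α, α ^ 2`. -/
theorem exists_eq_smul_pow_of_pow_three_eq [CharZero E] (hα : α ^ 3 = algebraMap E K e)
    (he : ∀ b : E, b ^ 3 ≠ e) (hgen : Algebra.adjoin E {α} = ⊤) {d : E} (hd : ∀ b : E, b ^ 3 ≠ d)
    {β : K} (hβ : β ^ 3 = algebraMap E K d) : ∃ a : E, β = a • α ∨ β = a • α ^ 2 := by
  obtain ⟨b, hb⟩ := exists_basis_sub_pow three_ne_zero
    (X_pow_sub_C_irreducible_of_prime Nat.prime_three he) hα hgen 0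
  simp only [map_zero, sub_zero] at hb
  have : FiniteDimensional E K := b.finiteDimensional_of_finite
  have hrank : Module.finrank E K = 3 := by simpa using Module.finrank_eq_card_basis b
  have htrace_one : Algebra.trace E K 1 = 3 := by
    simpa [hrank] using Algebra.trace_algebraMap (S := K) (1 : E)
  have htrace (a₀ a₁ a₂ : E) : Algebra.trace E K (a₀ • 1 + a₁ • α + a₂ • α ^ 2) = 3 * a₀ := by
    rw [map_add, map_add, map_smul, map_smul, map_smul, htrace_one,
      trace_eq_zero_of_pow_three_eq he hα, trace_sq_eq_zero_of_pow_three_eq he hα]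
    simp [mul_comm]
  obtain ⟨a₀, a₁, a₂, rfl⟩ : ∃ a₀ a₁ a₂ : E, β = a₀ • 1 + a₁ • α + a₂ • α ^ 2 :=
    ⟨b.repr β 0, b.repr β 1, b.repr β 2, by
      simpa [hb, Fin.sum_univ_three] using (b.sum_repr β).symm⟩
  have h₀ : a₀ = 0 := by
    simpa using (htrace a₀ a₁ a₂).symm.trans (trace_eq_zero_of_pow_three_eq hd hβ)
  subst h₀
  have hsq : ((0 : E) • (1 : K) + a₁ • α + a₂ • α ^ 2) ^ 2 =
      (2 * a₁ * a₂ * e) • 1 + (a₂ ^ 2 * e) • α + a₁ ^ 2 • α ^ 2 := by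
    simp only [Algebra.smul_def, map_mul, map_pow, map_ofNat, map_zero, ← hα]
    ring
  have he0 : e ≠ 0 := fun h ↦ he 0 (by rw [h, zero_pow three_ne_zero])
  have hprod : a₁ = 0 ∨ a₂ = 0 := by
    have := trace_sq_eq_zero_of_pow_three_eq hd hβ
    rw [hsq, htrace] at this
    simpa [he0] using this
  rcases hprod with rfl | rfl
  · exact ⟨a₂, .inr (by simp)⟩
  · exact ⟨a₁, .inl (by simp)⟩

end RadicalExtensions

/-- `ω` and `μ` are cube roots of two non-associated primes `f` and `g` of `S`, and they generate
`K` over the fraction field `L` of `S`. -/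
structure IsBicubic {S : Type*} (L : Type*) {K : Type*} [CommRing S] [Field L] [Field K]
    [Algebra L K] [Algebra S K] (f g : S) (ω μ : K) : Prop where
  prime_left : Prime f
  prime_right : Prime g
  not_left_dvd_right : ¬f ∣ g
  not_right_dvd_left : ¬g ∣ f
  pow_left : ω ^ 3 = algebraMap S K f
  pow_right : μ ^ 3 = algebraMap S K g
  adjoin_eq_top : Algebra.adjoin L {ω, μ} = ⊤

namespace IsBicubic

variable {S L K : Type*} [CommRing S] [Field L] [Field K] [Algebra L K] [Algebra S K]
  {f g : S} {ω μ : K}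

theorem symm (h : IsBicubic L f g ω μ) : IsBicubic L g f μ ω where
  prime_left := h.prime_right
  prime_right := h.prime_left
  not_left_dvd_right := h.not_right_dvd_left
  not_right_dvd_left := h.not_left_dvd_right
  pow_left := h.pow_right
  pow_right := h.pow_left
  adjoin_eq_top := Set.pair_comm ω μ ▸ h.adjoin_eq_top

theorem adjoin_right_eq_top (h : IsBicubic L f g ω μ) : Algebra.adjoin L⟮ω⟯ {μ} = ⊤ := by
  have hω : ω ∈ Algebra.adjoin L⟮ω⟯ {μ} := by
    simpa using (Algebra.adjoin L⟮ω⟯ {μ}).algebraMap_mem (AdjoinSimple.gen L ω)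
  have hμ : μ ∈ Algebra.adjoin L⟮ω⟯ {μ} := Algebra.self_mem_adjoin_singleton _ μ
  have hle : Algebra.adjoin L {ω, μ} ≤ (Algebra.adjoin L⟮ω⟯ {μ}).restrictScalars L :=
    Algebra.adjoin_le (Set.pair_subset hω hμ)
  exact eq_top_iff.2 fun z _ ↦ hle (h.adjoin_eq_top ▸ Algebra.mem_top)

variable [Algebra S L]

theorem pow_left_gen [IsScalarTower S L K] (h : IsBicubic L f g ω μ) :
    AdjoinSimple.gen L ω ^ 3 = algebraMap L L⟮ω⟯ (algebraMap S L f) := by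
  refine (algebraMap L⟮ω⟯ K).injective ?_
  rw [map_pow, AdjoinSimple.algebraMap_gen, h.pow_left, ← IsScalarTower.algebraMap_apply L L⟮ω⟯ K,
    ← IsScalarTower.algebraMap_apply S L K]

theorem pow_right_eq [IsScalarTower S L K] (h : IsBicubic L f g ω μ) :
    μ ^ 3 = algebraMap L⟮ω⟯ K (algebraMap L L⟮ω⟯ (algebraMap S L g)) := by
  rw [h.pow_right, ← IsScalarTower.algebraMap_apply L L⟮ω⟯ K,
    ← IsScalarTower.algebraMap_apply S L K]

theorem adjoin_gen_eq_top [IsScalarTower S L K] (h : IsBicubic L f g ω μ) :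
    Algebra.adjoin L {AdjoinSimple.gen L ω} = ⊤ := by
  have hint : IsIntegral L ω := .of_pow three_pos (by
    rw [h.pow_left, IsScalarTower.algebraMap_apply S L K]; exact isIntegral_algebraMap)
  simpa using (adjoin.powerBasis hint).adjoin_gen_eq_top

variable [IsDomain S] [IsIntegrallyClosed S] [IsFractionRing S L]

theorem irreducible_left (h : IsBicubic L f g ω μ) :
    Irreducible (X ^ 3 - C (algebraMap S L f)) := by
  refine X_pow_sub_C_irreducible_of_prime Nat.prime_three fun b ↦ ?_
  simpa using pow_ne_algebraMap_mul_of_prime (by norm_num : 2 ≤ 3) h.prime_left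
    h.prime_left.not_dvd_one b

variable [IsScalarTower S L K] [CharZero L]

theorem irreducible_right (h : IsBicubic L f g ω μ) :
    Irreducible (X ^ 3 - C (algebraMap L L⟮ω⟯ (algebraMap S L g))) := by
  have hne {p : S} (hp : Prime p) (b : L) : b ^ 3 ≠ algebraMap S L p := by
    simpa using pow_ne_algebraMap_mul_of_prime (by norm_num : 2 ≤ 3) hp hp.not_dvd_one b
  refine X_pow_sub_C_irreducible_of_prime Nat.prime_three fun β hβ ↦ ?_
  obtain ⟨a, rfl | rfl⟩ := exists_eq_smul_pow_of_pow_three_eq h.pow_left_gen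
    (hne h.prime_left) h.adjoin_gen_eq_top (hne h.prime_right) hβ
  · have hcube : (a * algebraMap S L f) ^ 3 = algebraMap S L (g * f ^ 2) := by
      refine (algebraMap L L⟮ω⟯).injective ?_
      rw [Algebra.smul_def, mul_pow, h.pow_left_gen, ← map_pow] at hβ
      simp only [map_mul, map_pow, ← hβ]
      ring
    exact pow_ne_algebraMap_mul_of_prime (by norm_num) h.prime_right
      (fun hd ↦ h.not_right_dvd_left (h.prime_right.dvd_of_dvd_pow hd)) _ hcube
  · have hcube : (a * algebraMap S L f) ^ 3 = algebraMap S L (g * f) := by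
      refine (algebraMap L L⟮ω⟯).injective ?_
      rw [Algebra.smul_def, mul_pow, pow_right_comm, h.pow_left_gen, ← map_pow] at hβ
      simp only [map_mul, map_pow, ← hβ]
      ring
    exact pow_ne_algebraMap_mul_of_prime (by norm_num) h.prime_right h.not_right_dvd_left _ hcube

theorem exists_basis_sub_pow_mul_sub_pow (h : IsBicubic L f g ω μ) (a b : L) :
    ∃ e : Module.Basis (Fin 3 × Fin 3) L K, ∀ i,
      e i = (ω - algebraMap L K a) ^ (i.1 : ℕ) * (μ - algebraMap L K b) ^ (i.2 : ℕ) := by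
  obtain ⟨d, hd⟩ := exists_basis_sub_pow three_ne_zero h.irreducible_left h.pow_left_gen
    h.adjoin_gen_eq_top a
  obtain ⟨d', hd'⟩ := exists_basis_sub_pow three_ne_zero h.irreducible_right h.pow_right_eq
    h.adjoin_right_eq_top (algebraMap L L⟮ω⟯ b)
  refine ⟨d.smulTower d', fun i ↦ ?_⟩
  rw [Module.Basis.smulTower_apply, hd, hd', Algebra.smul_def, map_pow, map_sub,
    AdjoinSimple.algebraMap_gen, ← IsScalarTower.algebraMap_apply,
    ← IsScalarTower.algebraMap_apply]

theorem finrank_eq_nine (h : IsBicubic L f g ω μ) : Module.finrank L K = 9 := by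
  obtain ⟨b, -⟩ := h.exists_basis_sub_pow_mul_sub_pow 0 0
  simpa using Module.finrank_eq_card_basis b

theorem isIntegral_three_mul_sum (h : IsBicubic L f g ω μ) {c : Fin 3 → Fin 3 → L}
    (hc : IsIntegral S (∑ i, ∑ j, c i j • (ω ^ (i : ℕ) * μ ^ (j : ℕ)))) (j : Fin 3) :
    IsIntegral S (3 * ∑ i, c i j • (ω ^ (i : ℕ) * μ ^ (j : ℕ))) := by
  have : IsScalarTower S L⟮ω⟯ K := IsScalarTower.to₁₃₄ S L L⟮ω⟯ K
  have hproj := isIntegral_natCast_mul_smul_pow (S := S) h.irreducible_right h.pow_right_eq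
    (c := fun j ↦ ∑ i, c i j • AdjoinSimple.gen L ω ^ (i : ℕ)) ?_ j
  · simpa [Finset.mul_sum, Finset.sum_mul, Algebra.smul_def, mul_assoc] using hproj
  · rw [Finset.sum_comm] at hc
    simpa [Finset.sum_mul, Algebra.smul_def, mul_assoc] using hc

theorem isIntegral_nine_mul_smul (h : IsBicubic L f g ω μ) {c : Fin 3 → Fin 3 → L}
    (hc : IsIntegral S (∑ i, ∑ j, c i j • (ω ^ (i : ℕ) * μ ^ (j : ℕ)))) (i j : Fin 3) :
    IsIntegral S (9 * c i j • (ω ^ (i : ℕ) * μ ^ (j : ℕ))) := by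
  have hrow := h.isIntegral_three_mul_sum hc j
  have hentry := h.symm.isIntegral_three_mul_sum
    (c := fun j' i' ↦ if j' = j then 3 * c i' j else 0) ?_ i
  · simp only [ite_smul, zero_smul, Finset.sum_ite_eq', Finset.mem_univ, if_true] at hentry
    convert hentry using 1
    simp only [Algebra.smul_def, map_mul, map_ofNat]
    ring
  · rw [Finset.sum_comm]
    simp only [ite_smul, zero_smul, Finset.sum_ite_eq', Finset.mem_univ, if_true]
    convert hrow using 1
    rw [Finset.mul_sum]
    refine Finset.sum_congr rfl fun i' _ ↦ ?_
    simp only [Algebra.smul_def, map_mul, map_ofNat]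
    ring

theorem nine_smul_mem_span (h : IsBicubic L f g ω μ) {w : K} (hw : IsIntegral S w) :
    (9 : S) • w ∈
      Submodule.span S (Set.range fun i : Fin 3 × Fin 3 ↦ ω ^ (i.1 : ℕ) * μ ^ (i.2 : ℕ)) := by
  obtain ⟨b, hb⟩ := h.exists_basis_sub_pow_mul_sub_pow 0 0
  simp only [map_zero, sub_zero] at hb
  have hsum : w = ∑ i, ∑ j, b.repr w (i, j) • (ω ^ (i : ℕ) * μ ^ (j : ℕ)) := by
    rw [← Fintype.sum_prod_type (f := fun i ↦ b.repr w i • (ω ^ (i.1 : ℕ) * μ ^ (i.2 : ℕ)))]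
    simpa only [hb] using (b.sum_repr w).symm
  have hcoeff (i : Fin 3 × Fin 3) : ∃ t : S, algebraMap S L t = 9 * b.repr w i := by
    have hint := (h.isIntegral_nine_mul_smul (c := fun i j ↦ b.repr w (i, j)) (hsum ▸ hw)
      i.1 i.2).pow 3
    have hL : (9 * b.repr w i • (ω ^ (i.1 : ℕ) * μ ^ (i.2 : ℕ))) ^ 3 =
        algebraMap L K ((9 * b.repr w i) ^ 3 * algebraMap S L f ^ (i.1 : ℕ) *
          algebraMap S L g ^ (i.2 : ℕ)) := by
      simp only [Algebra.smul_def, map_mul, map_pow, map_ofNat,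
        ← IsScalarTower.algebraMap_apply S L K, ← h.pow_left, ← h.pow_right]
      ring
    rw [hL, isIntegral_algebraMap_iff (algebraMap L K).injective] at hint
    obtain ⟨s, hs⟩ := IsIntegrallyClosed.isIntegral_iff.1 hint
    exact exists_algebraMap_eq_of_pow_mul_prime_pow_mul_prime_pow_eq i.1.2 i.2.2 h.prime_left
      h.prime_right h.not_right_dvd_left hs.symm
  choose t ht using hcoeff
  have h9 : (9 : S) • w = ∑ i, t i • (ω ^ (i.1 : ℕ) * μ ^ (i.2 : ℕ)) := by
    conv_lhs => rw [← b.sum_repr w, Finset.smul_sum]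
    refine Finset.sum_congr rfl fun i _ ↦ ?_
    rw [hb, ← algebraMap_smul L (t i), ht, mul_smul, ← algebraMap_smul L (9 : S), map_ofNat]
  rw [h9]
  exact Submodule.sum_mem _ fun i _ ↦ Submodule.smul_mem _ _ (Submodule.subset_span ⟨i, rfl⟩)

end IsBicubic

end PureExtensions

theorem eq_of_three_mul_eq {A : Type*} [CommRing A] [IsDomain A] [CharZero A] {a b : A}
    (hab : 3 * a = 3 * b) : a = b :=
  mul_left_cancel₀ (OfNat.ofNat_ne_zero 3) hab

/-- A pair of elements `f = x ^ 3 + 3 * α` and `g = y ^ 3 + 3 * β` whose product is, up to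
multiples of `9`, the cube of `x * y`: this is what divisibility of `α * y ^ 3 + β * x ^ 3` by `3`
means, and `γ` is the quotient. -/
structure CubicPair (A : Type*) [CommRing A] where
  (x y α β γ : A)
  relation : α * y ^ 3 + β * x ^ 3 = 3 * γ

namespace CubicPair

section Basic

variable {A B : Type*} [CommRing A] [CommRing B] (P : CubicPair A)

/-- The first of the two elements described by a `CubicPair`. -/
def f : A := P.x ^ 3 + 3 * P.α

/-- The second of the two elements described by a `CubicPair`. -/
def g : A := P.y ^ 3 + 3 * P.β

/-- The element `h` in the expansion `f * g = h ^ 3 + 9 * c`. -/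
def h : A := P.x * P.y

/-- The element `c` in the expansion `f * g = h ^ 3 + 9 * c`. -/
def c : A := P.γ + P.α * P.β

theorem f_mul_g : P.f * P.g = P.h ^ 3 + 9 * P.c := by
  simp only [f, g, h, c]
  linear_combination 3 * P.relation

/-- The coordinates of the relation `3 * σ = (y * u + x * v) ^ 2` between the generators of
`Thirds.generators`. -/
def relationVector : Fin 10 → A :=
  ![0, 0, 0, -P.y ^ 2, -2 * P.x * P.y, -P.x ^ 2, 0, 0, 0, 3]

theorem relationVector_ne_zero (h3 : (3 : A) ≠ 0) : P.relationVector ≠ 0 :=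
  fun h ↦ h3 (congrFun h 9)

theorem relationVector_mem_span (i : Fin 10) :
    P.relationVector i ∈ Ideal.span {3, P.x, P.y} := by
  have h3 : 3 ∈ Ideal.span {3, P.x, P.y} := Ideal.subset_span (by simp)
  have hx : P.x ∈ Ideal.span {3, P.x, P.y} := Ideal.subset_span (by simp)
  have hy : P.y ∈ Ideal.span {3, P.x, P.y} := Ideal.subset_span (by simp)
  fin_cases i
  exacts [zero_mem _, zero_mem _, zero_mem _, neg_mem (Ideal.pow_mem_of_mem _ hy 2 two_pos),
    Ideal.mul_mem_left _ _ hy, neg_mem (Ideal.pow_mem_of_mem _ hx 2 two_pos), zero_mem _,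
    zero_mem _, zero_mem _, h3]

theorem f_mem_span : P.f ∈ Ideal.span {3, P.x, P.y} :=
  Ideal.mem_span_insert.2 ⟨P.α, _, Ideal.mem_span_pair.2 ⟨P.x ^ 2, 0, rfl⟩, by rw [f]; ring⟩

theorem g_mem_span : P.g ∈ Ideal.span {3, P.x, P.y} :=
  Ideal.mem_span_insert.2 ⟨P.β, _, Ideal.mem_span_pair.2 ⟨0, P.y ^ 2, rfl⟩, by rw [g]; ring⟩

/-- The image of a `CubicPair` under a ring homomorphism. -/
@[simps]
def map (φ : A →+* B) : CubicPair B where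
  x := φ P.x
  y := φ P.y
  α := φ P.α
  β := φ P.β
  γ := φ P.γ
  relation := by simpa [map_ofNat] using congrArg φ P.relation

@[simp]
theorem map_f (φ : A →+* B) : (P.map φ).f = φ P.f := by simp [f, map_ofNat]

@[simp]
theorem map_g (φ : A →+* B) : (P.map φ).g = φ P.g := by simp [g, map_ofNat]

@[simp]
theorem map_h (φ : A →+* B) : (P.map φ).h = φ P.h := by simp [h]

@[simp]
theorem map_c (φ : A →+* B) : (P.map φ).c = φ P.c := by simp [c]

/-- The `CubicPair` with the roles of `f` and `g` exchanged. -/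
@[simps]
def swap : CubicPair A where
  x := P.y
  y := P.x
  α := P.β
  β := P.α
  γ := P.γ
  relation := by rw [add_comm, P.relation]

end Basic

/-- Given cube roots `u + x` of `f` and `v + y` of `g`, the elements
`p = u ^ 2 * v / 3`, `q = u * v ^ 2 / 3` and `τ = (θ ^ 2 + h * θ + h ^ 2) / 3`, where
`θ = (u + x) * (v + y)`. -/
structure Thirds {B : Type*} [CommRing B] (P : CubicPair B) where
  (u v p q τ : B)
  add_pow_left : (u + P.x) ^ 3 = P.f
  add_pow_right : (v + P.y) ^ 3 = P.g
  three_mul_p : 3 * p = u ^ 2 * v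
  three_mul_q : 3 * q = u * v ^ 2
  three_mul_τ : 3 * τ = ((u + P.x) * (v + P.y)) ^ 2 + P.h * ((u + P.x) * (v + P.y)) + P.h ^ 2

namespace Thirds

variable {B : Type*} [CommRing B] {P : CubicPair B} (T : P.Thirds)

/-- The exchange of the two cube roots. -/
@[simps]
def swap : P.swap.Thirds where
  u := T.v
  v := T.u
  p := T.q
  q := T.p
  τ := T.τ
  add_pow_left := T.add_pow_right
  add_pow_right := T.add_pow_left
  three_mul_p := by rw [T.three_mul_q]; ring
  three_mul_q := by rw [T.three_mul_p]; ring
  three_mul_τ := by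
    rw [T.three_mul_τ]
    simp only [swap_x, swap_y, h]
    ring

/-- The element `u ^ 3 / 3`. -/
def a : B := P.α - P.x * T.u ^ 2 - P.x ^ 2 * T.u

/-- The element `u ^ 2 * v ^ 2 / 3`. -/
def r : B := T.p * T.v

/-- The element `θ - h`, where `θ` is the product of the two cube roots. -/
def z : B := T.u * T.v + P.x * T.v + P.y * T.u

/-- The element `(y * u + x * v) ^ 2 / 3`. -/
def σ : B := T.τ - T.r - 2 * P.x * T.q - 2 * P.y * T.p - P.h * T.z - P.h ^ 2

/-- The element `u ^ 2 * z / 3`. -/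
def t : B := T.a * (T.v + P.y) + P.x * T.p

/-- The element `z ^ 2 / 3`. -/
def ζ : B := T.τ - P.h * T.z - P.h ^ 2

theorem u_pow_three : T.u ^ 3 = 3 * T.a := by
  linear_combination (norm := (simp only [a, f]; ring)) T.add_pow_left

theorem v_pow_three : T.v ^ 3 = 3 * T.swap.a := T.swap.u_pow_three

theorem theta_eq : (T.u + P.x) * (T.v + P.y) = T.z + P.h := by
  simp only [z, h]
  ring

theorem z_sq : T.z ^ 2 = 3 * T.ζ := by
  linear_combination (norm := (simp only [ζ, theta_eq]; ring)) -T.three_mul_τ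

theorem u_sq_mul_z : T.u ^ 2 * T.z = 3 * T.t := by
  linear_combination (norm := (simp only [z, t]; ring))
    (T.v + P.y) * T.u_pow_three - P.x * T.three_mul_p

theorem τ_eq : T.τ = T.σ + T.r + 2 * P.x * T.q + 2 * P.y * T.p + P.h * T.z + P.h ^ 2 := by
  simp only [σ]
  ring

theorem three_mul_r : 3 * T.r = T.u ^ 2 * T.v ^ 2 := by
  linear_combination (norm := (simp only [r]; ring)) T.v * T.three_mul_p

theorem three_mul_σ : 3 * T.σ = (P.y * T.u + P.x * T.v) ^ 2 := by
  linear_combination (norm := (simp only [σ, z, h]; ring)) T.three_mul_τ - T.three_mul_r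
    - 2 * P.x * T.three_mul_q - 2 * P.y * T.three_mul_p

variable [IsDomain B] [CharZero B]

theorem z_mul_τ : T.z * T.τ = 3 * P.c := by
  refine eq_of_three_mul_eq ?_
  have hθ := T.theta_eq
  linear_combination (norm := skip) T.z * T.three_mul_τ + T.add_pow_left * (T.v + P.y) ^ 3 +
    P.f * T.add_pow_right + P.f_mul_g
  rw [← mul_pow, hθ]
  ring

theorem u_mul_t : T.u * T.t = T.a * T.z :=
  eq_of_three_mul_eq (by linear_combination -T.u * T.u_sq_mul_z + T.z * T.u_pow_three)

theorem z_mul_t : T.z * T.t = T.u ^ 2 * T.ζ :=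
  eq_of_three_mul_eq (by linear_combination -T.z * T.u_sq_mul_z + T.u ^ 2 * T.z_sq)

theorem t_sq : T.t ^ 2 = T.u * T.a * T.ζ :=
  eq_of_three_mul_eq (by
    linear_combination -T.t * T.u_sq_mul_z + T.u ^ 2 * T.z_mul_t + T.u * T.ζ * T.u_pow_three)

theorem u_mul_p : T.u * T.p = T.a * T.v :=
  eq_of_three_mul_eq (by linear_combination T.u * T.three_mul_p + T.v * T.u_pow_three)

theorem u_mul_q : T.u * T.q = T.r :=
  eq_of_three_mul_eq (by linear_combination T.u * T.three_mul_q - T.three_mul_r)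

theorem u_mul_r : T.u * T.r = T.a * T.v ^ 2 :=
  eq_of_three_mul_eq (by linear_combination T.u * T.three_mul_r + T.v ^ 2 * T.u_pow_three)

theorem u_mul_σ : T.u * T.σ = P.y ^ 2 * T.a + 2 * P.x * P.y * T.p + P.x ^ 2 * T.q :=
  eq_of_three_mul_eq (by
    linear_combination T.u * T.three_mul_σ + P.y ^ 2 * T.u_pow_three -
      2 * P.x * P.y * T.three_mul_p - P.x ^ 2 * T.three_mul_q)

theorem swap_r : T.swap.r = T.r := by
  rw [← T.u_mul_q, mul_comm]
  rfl

theorem swap_σ : T.swap.σ = T.σ :=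
  eq_of_three_mul_eq (by
    rw [T.swap.three_mul_σ, T.three_mul_σ]
    simp only [swap_x, swap_y, swap_u, swap_v]
    ring)

theorem τ_pow_three :
    T.τ ^ 3 = P.h ^ 2 * T.τ ^ 2 + 3 * P.h * P.c * T.τ + 3 * P.c ^ 2 :=
  eq_of_three_mul_eq (by
    linear_combination (norm := (simp only [ζ]; ring)) -T.τ ^ 2 * T.z_sq +
      (T.z * T.τ + 3 * P.c + 3 * P.h * T.τ) * T.z_mul_τ)

end Thirds

end CubicPair

section LyingOver

open Polynomial

variable {S B : Type*} [CommRing S] [CommRing B] [Algebra S B]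

/- Multiplication by `s` sends `e` to `π` times a unit at `Q`, and `T` into `π * Q`; hence the
coefficient of `e` in a combination divisible by `π` is itself divisible by `π`. -/
theorem isSMulRegular_quotient_span_insert {π : S} {ϖ : B} (hϖ : algebraMap S B π = ϖ)
    (hreg : IsSMulRegular B π) {Q : Ideal B} [Q.IsPrime]
    (hQ : Q.comap (algebraMap S B) = Ideal.span {π}) {T : Set B} {e s e' : B} (hs : s ∈ Q)
    (hT : ∀ n ∈ T, ∃ q ∈ Q, s * n = ϖ * q) (he : s * e = ϖ * e') (he' : e' ∉ Q)
    (h : IsSMulRegular (B ⧸ Submodule.span S T) π) :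
    IsSMulRegular (B ⧸ Submodule.span S (insert e T)) π := by
  subst hϖ
  rw [isSMulRegular_quotient_iff_mem_of_smul_mem] at h ⊢
  have hspan : ∀ n ∈ Submodule.span S T, ∃ q ∈ Q, s * n = algebraMap S B π * q := by
    intro n hn
    induction hn using Submodule.span_induction with
    | mem n hn => exact hT n hn
    | zero => exact ⟨0, Q.zero_mem, by simp⟩
    | add n m _ _ hn hm =>
      obtain ⟨⟨q, hq, hnq⟩, q', hq', hmq⟩ := hn, hm
      exact ⟨q + q', Q.add_mem hq hq', by rw [mul_add, mul_add, hnq, hmq]⟩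
    | smul a n _ hn =>
      obtain ⟨q, hq, hnq⟩ := hn
      exact ⟨a • q, Q.smul_of_tower_mem a hq, by rw [mul_smul_comm, mul_smul_comm, hnq]⟩
  intro w hw
  obtain ⟨c, n, hn, hwn⟩ := Submodule.mem_span_insert.1 hw
  obtain ⟨q, hq, hnq⟩ := hspan n hn
  have hcancel : s * w = c • e' + q := by
    refine hreg ?_
    simp only [Algebra.smul_def] at hwn ⊢
    linear_combination s * hwn + algebraMap S B c * he + hnq
  have hce : c • e' ∈ Q := by
    simpa [hcancel] using sub_mem (Q.mul_mem_right w hs) hq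
  have hc : c ∈ Ideal.span {π} := by
    rw [← hQ, Ideal.mem_comap]
    exact (‹Q.IsPrime›.mem_or_mem (Algebra.smul_def c e' ▸ hce)).resolve_right he'
  obtain ⟨c', rfl⟩ := Ideal.mem_span_singleton.1 hc
  have hw' : w - c' • e ∈ Submodule.span S T := by
    refine h _ ?_
    rwa [smul_sub, hwn, mul_smul, add_sub_cancel_left]
  exact Submodule.mem_span_insert.2 ⟨c', _, hw', by abel⟩

theorem exists_isPrime_comap_eq_sub_algebraMap_mem [IsDomain S] [IsIntegrallyClosed S] [IsDomain B]
    [Module.IsTorsionFree S B] [Algebra.IsIntegral S B] {π s : S} {b : B} (hπ : Prime π)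
    (hs : π ∣ (minpoly S b).eval s) :
    ∃ Q : Ideal B, Q.IsPrime ∧ Q.comap (algebraMap S B) = Ideal.span {π} ∧
      b - algebraMap S B s ∈ Q := by
  let : Algebra S[X] B := (aeval b : S[X] →ₐ[S] B).toRingHom.toAlgebra
  have hmap (q : S[X]) : algebraMap S[X] B q = aeval b q := rfl
  have : IsScalarTower S S[X] B := .of_algebraMap_eq fun r ↦ by simp [hmap]
  have : Algebra.IsIntegral S[X] B := .tower_top S
  have hπ' : (Ideal.span {π}).IsPrime := (Ideal.span_singleton_prime hπ.ne_zero).2 hπ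
  have hle : Ideal.comap (algebraMap S[X] B) ⊥ ≤ (Ideal.span {π}).comap (evalRingHom s) := by
    intro q hq
    have hdvd : minpoly S b ∣ q :=
      (minpoly.isIntegrallyClosed_dvd_iff (Algebra.IsIntegral.isIntegral b) q).1
        (by simpa [hmap] using hq)
    exact Ideal.mem_span_singleton.2 (hs.trans (eval_dvd hdvd))
  obtain ⟨Q, -, hQ, hcomap⟩ := Ideal.exists_ideal_over_prime_of_isIntegral
    ((Ideal.span {π}).comap (evalRingHom s)) (⊥ : Ideal B) hle
  refine ⟨Q, hQ, ?_, ?_⟩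
  · rw [IsScalarTower.algebraMap_eq S S[X] B, ← Ideal.comap_comap, hcomap, Ideal.comap_comap]
    ext; simp
  · have : X - C s ∈ Q.comap (algebraMap S[X] B) := by rw [hcomap]; simp
    simpa [hmap] using this

end LyingOver

open Polynomial in
theorem irreducible_X_pow_three_sub_of_pow_three_ne {L : Type*} [Field L] [CharZero L] {h c : L}
    (hhc : ∀ b, b ^ 3 ≠ h ^ 3 + 9 * c) :
    Irreducible (X ^ 3 - C (h ^ 2) * X ^ 2 - C (3 * h * c) * X - C (3 * c ^ 2)) := by
  have hc : c ≠ 0 := by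
    rintro rfl
    exact hhc h (by ring)
  have hdeg : (X ^ 3 - C (h ^ 2) * X ^ 2 - C (3 * h * c) * X - C (3 * c ^ 2)).natDegree = 3 := by
    compute_degree!
  rw [Monic.irreducible_iff_roots_eq_zero_of_degree_le_three (by monicity!) (by rw [hdeg]; norm_num)
    hdeg.le]
  refine Multiset.eq_zero_of_forall_notMem fun t ht ↦ ?_
  have hroot : t ^ 3 - h ^ 2 * t ^ 2 - 3 * h * c * t - 3 * c ^ 2 = 0 := by
    simpa using (isRoot_of_mem_roots ht).eq_zero
  have ht0 : t ≠ 0 := by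
    rintro rfl
    simp [hc] at hroot
  refine hhc (h + 3 * c / t) ?_
  field_simp
  linear_combination -9 * c * hroot

namespace CubicPair

open Polynomial

section Cubic

variable {S : Type*} [CommRing S]

/-- The cubic polynomial of which the element `τ` of `Thirds` is a root. -/
noncomputable def cubic (P : CubicPair S) : S[X] :=
  X ^ 3 - C (P.h ^ 2) * X ^ 2 - C (3 * P.h * P.c) * X - C (3 * P.c ^ 2)

theorem monic_cubic (P : CubicPair S) : P.cubic.Monic := by
  unfold cubic
  monicity!

theorem irreducible_cubic [IsIntegrallyClosed S] {P : CubicPair S} (L : Type*)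
    [Field L] [CharZero L] [Algebra S L] [IsFractionRing S L]
    (hL : ∀ b : L, b ^ 3 ≠ algebraMap S L (P.f * P.g)) : Irreducible P.cubic := by
  rw [P.monic_cubic.irreducible_iff_irreducible_map_fraction_map (K := L), cubic]
  simp only [Polynomial.map_sub, Polynomial.map_mul, Polynomial.map_pow, map_X, map_C]
  simp only [map_mul (algebraMap S L), map_pow (algebraMap S L), map_ofNat (algebraMap S L)]
  refine irreducible_X_pow_three_sub_of_pow_three_ne fun b hb ↦ hL b ?_
  rw [hb, f_mul_g, map_add, map_mul, map_pow, map_ofNat]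

variable {B : Type*} [CommRing B] [IsDomain B] [CharZero B] [Algebra S B] {P : CubicPair S}

theorem aeval_τ_cubic (T : (P.map (algebraMap S B)).Thirds) : aeval T.τ P.cubic = 0 := by
  simp only [cubic, map_sub, map_mul, map_pow, aeval_X, aeval_C, map_ofNat, T.τ_pow_three, map_h,
    map_c]
  ring

end Cubic

namespace Thirds

variable {S B : Type*} [CommRing S] [IsDomain S] [IsIntegrallyClosed S] [CommRing B]
  [IsDomain B] [CharZero B] [Algebra S B] [Module.IsTorsionFree S B] {P : CubicPair S}
  (T : (P.map (algebraMap S B)).Thirds)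

theorem minpoly_τ (L : Type*) [Field L] [CharZero L] [Algebra S L] [IsFractionRing S L]
    (hL : ∀ b : L, b ^ 3 ≠ algebraMap S L (P.f * P.g)) : minpoly S T.τ = P.cubic := by
  have hint : IsIntegral S T.τ := ⟨P.cubic, P.monic_cubic, aeval_τ_cubic T⟩
  exact eq_of_monic_of_associated (minpoly.monic hint) P.monic_cubic <|
    (minpoly.irreducible hint).associated_of_dvd (irreducible_cubic L hL)
      (minpoly.isIntegrallyClosed_dvd hint (aeval_τ_cubic T))

variable [Algebra.IsIntegral S B]

theorem exists_isPrime_τ_sub_mem (h3 : Prime (3 : S)) (L : Type*) [Field L] [CharZero L]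
    [Algebra S L] [IsFractionRing S L] (hL : ∀ b : L, b ^ 3 ≠ algebraMap S L (P.f * P.g)) :
    ∃ Q : Ideal B, Q.IsPrime ∧ Q.comap (algebraMap S B) = Ideal.span {3} ∧
      T.τ - algebraMap S B (P.h ^ 2) ∈ Q := by
  refine exists_isPrime_comap_eq_sub_algebraMap_mem h3
    ⟨-P.h ^ 3 * P.c - P.c ^ 2, ?_⟩
  rw [T.minpoly_τ L hL, cubic]
  simp only [eval_sub, eval_mul, eval_pow, eval_X, eval_C]
  ring

theorem exists_isPrime_τ_mem (h3 : Prime (3 : S)) (L : Type*) [Field L] [CharZero L]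
    [Algebra S L] [IsFractionRing S L] (hL : ∀ b : L, b ^ 3 ≠ algebraMap S L (P.f * P.g)) :
    ∃ Q : Ideal B, Q.IsPrime ∧ Q.comap (algebraMap S B) = Ideal.span {3} ∧ T.τ ∈ Q := by
  simpa using exists_isPrime_comap_eq_sub_algebraMap_mem (s := 0) (b := T.τ) h3
    ⟨-P.c ^ 2, by rw [T.minpoly_τ L hL, cubic]; simp⟩

section Saturation

variable {S B : Type*} [CommRing S] [CommRing B] [Algebra S B] {P : CubicPair S}
  (T : (P.map (algebraMap S B)).Thirds) {Q Q₁ Q₂ : Ideal B}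

theorem algebraMap_mem_iff_three_dvd (hQ : Q.comap (algebraMap S B) = Ideal.span {3}) {s : S} :
    algebraMap S B s ∈ Q ↔ 3 ∣ s := by
  rw [← Ideal.mem_comap, hQ, Ideal.mem_span_singleton]

theorem three_mem (hQ : Q.comap (algebraMap S B) = Ideal.span {3}) : (3 : B) ∈ Q := by
  simpa only [map_ofNat] using (algebraMap_mem_iff_three_dvd hQ).2 (dvd_refl (3 : S))

theorem u_mem [Q.IsPrime] (hQ : Q.comap (algebraMap S B) = Ideal.span {3}) : T.u ∈ Q :=
  ‹Q.IsPrime›.mem_of_pow_mem 3 (T.u_pow_three ▸ Q.mul_mem_right _ (three_mem hQ))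

theorem z_mem [Q.IsPrime] (hQ : Q.comap (algebraMap S B) = Ideal.span {3}) : T.z ∈ Q :=
  ‹Q.IsPrime›.mem_of_pow_mem 2 (T.z_sq ▸ Q.mul_mem_right _ (three_mem hQ))

theorem a_notMem [Q.IsPrime] (hQ : Q.comap (algebraMap S B) = Ideal.span {3})
    (hα : ¬3 ∣ P.α) : T.a ∉ Q := by
  intro ha
  have hu := T.u_mem hQ
  have hmem : T.a + algebraMap S B P.x * T.u ^ 2 + algebraMap S B P.x ^ 2 * T.u ∈ Q :=
    add_mem (add_mem ha (Q.mul_mem_left _ (Q.pow_mem_of_mem hu 2 two_pos))) (Q.mul_mem_left _ hu)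
  refine hα ((algebraMap_mem_iff_three_dvd hQ).1 ?_)
  convert hmem using 1
  simp only [a, map_α, map_x]
  ring

theorem τ_notMem (hQ : Q.comap (algebraMap S B) = Ideal.span {3}) [Q.IsPrime] (hh : ¬3 ∣ P.h)
    (hτ : T.τ - algebraMap S B (P.h ^ 2) ∈ Q) : T.τ ∉ Q := fun hmem ↦ by
  have hh2 : algebraMap S B P.h ^ 2 ∈ Q := by simpa using sub_mem hmem hτ
  exact hh ((algebraMap_mem_iff_three_dvd hQ).1 (‹Q.IsPrime›.mem_of_pow_mem 2 hh2))

theorem ζ_notMem (hQ : Q.comap (algebraMap S B) = Ideal.span {3}) [Q.IsPrime] (hh : ¬3 ∣ P.h)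
    (hτ : T.τ ∈ Q) : T.ζ ∉ Q := fun hmem ↦ by
  have hh2 : algebraMap S B P.h ^ 2 ∈ Q := by
    have hsub := sub_mem (sub_mem hτ (Q.mul_mem_left (algebraMap S B P.h) (T.z_mem hQ))) hmem
    convert hsub using 1
    simp only [ζ, map_h]
    ring
  exact hh ((algebraMap_mem_iff_three_dvd hQ).1 (‹Q.IsPrime›.mem_of_pow_mem 2 hh2))

variable [IsDomain B] [CharZero B]

theorem t_mem [Q.IsPrime] (hQ : Q.comap (algebraMap S B) = Ideal.span {3}) : T.t ∈ Q :=
  ‹Q.IsPrime›.mem_of_pow_mem 2 (T.t_sq ▸ Q.mul_mem_right _ (Q.mul_mem_right _ (T.u_mem hQ)))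

theorem isSMulRegular_three : IsSMulRegular B (3 : S) := fun b b' hb ↦
  eq_of_three_mul_eq (by simpa only [Algebra.smul_def, map_ofNat] using hb)

variable [Q₁.IsPrime] [Q₂.IsPrime]

/- The generators of `innerLattice` are added one at a time, each at the prime at which a suitable
multiplier makes it a unit times `3`. -/
theorem isSMulRegular_quotient_span_insert_z (hQ₁ : Q₁.comap (algebraMap S B) = Ideal.span {3})
    (ha₁ : T.a ∉ Q₁) (hτ₁ : T.τ ∉ Q₁) (hQ₂ : Q₂.comap (algebraMap S B) = Ideal.span {3})
    (ha₂ : T.a ∉ Q₂) (hζ₂ : T.ζ ∉ Q₂) (hτ₂ : T.τ ∈ Q₂) :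
    IsSMulRegular (B ⧸ Submodule.span S {T.z, T.u ^ 2, T.u ^ 2 * T.τ, T.u * T.z}) (3 : S) := by
  have hu := T.u_mem hQ₂
  have ht := T.t_mem hQ₂
  refine isSMulRegular_quotient_span_insert (map_ofNat _ 3) isSMulRegular_three hQ₂
    (T.z_mem hQ₂) ?_ (by linear_combination T.z_sq) hζ₂ ?_
  · rintro n (rfl | rfl | rfl)
    · exact ⟨T.t, ht, by linear_combination T.u_sq_mul_z⟩
    · exact ⟨T.u * (T.u * (P.map _).c), Q₂.mul_mem_right _ hu,
        by linear_combination T.u ^ 2 * T.z_mul_τ⟩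
    · exact ⟨T.u * T.ζ, Q₂.mul_mem_right _ hu, by linear_combination T.u * T.z_sq⟩
  refine isSMulRegular_quotient_span_insert (map_ofNat _ 3) isSMulRegular_three hQ₂
    hu ?_ (e' := T.a) (by linear_combination T.u_pow_three) ha₂ ?_
  · rintro n (rfl | rfl)
    · exact ⟨T.a * T.τ, Q₂.mul_mem_left _ hτ₂, by linear_combination T.τ * T.u_pow_three⟩
    · exact ⟨T.t, ht, by linear_combination T.u_sq_mul_z⟩
  refine isSMulRegular_quotient_span_insert (map_ofNat _ 3) isSMulRegular_three hQ₁
    (T.u_mem hQ₁) ?_ (e' := T.a * T.τ) (by linear_combination T.τ * T.u_pow_three)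
    (‹Q₁.IsPrime›.mul_notMem ha₁ hτ₁) ?_
  · rintro n rfl
    exact ⟨T.t, T.t_mem hQ₁, by linear_combination T.u_sq_mul_z⟩
  rw [← insert_empty_eq]
  refine isSMulRegular_quotient_span_insert (map_ofNat _ 3) isSMulRegular_three hQ₂
    ht (by simp) (e' := T.a * T.ζ) (by linear_combination T.z * T.u_mul_t + T.a * T.z_sq)
    (‹Q₂.IsPrime›.mul_notMem ha₂ hζ₂) ?_
  rw [Submodule.span_empty, isSMulRegular_quotient_iff_mem_of_smul_mem]
  exact fun b hb ↦ isSMulRegular_three (S := S) (by simpa using hb)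

theorem isSMulRegular_quotient_span_insert_t (hQ₁ : Q₁.comap (algebraMap S B) = Ideal.span {3})
    (ha₁ : T.a ∉ Q₁) (hτ₁ : T.τ ∉ Q₁) (hQ₂ : Q₂.comap (algebraMap S B) = Ideal.span {3})
    (ha₂ : T.a ∉ Q₂) (hζ₂ : T.ζ ∉ Q₂) (hτ₂ : T.τ ∈ Q₂) :
    IsSMulRegular (B ⧸ Submodule.span S {T.t, T.u, T.u * T.τ, T.z, T.u ^ 2, T.u ^ 2 * T.τ,
      T.u * T.z}) (3 : S) := by
  have hu := T.u_mem hQ₂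
  have hz := T.z_mem hQ₂
  refine isSMulRegular_quotient_span_insert (map_ofNat _ 3) isSMulRegular_three hQ₂
    (Q₂.mul_mem_right T.z hu) ?_ (e' := T.a * T.ζ)
    (by linear_combination T.u * T.z_mul_t + T.ζ * T.u_pow_three)
    (‹Q₂.IsPrime›.mul_notMem ha₂ hζ₂) ?_
  · rintro n (rfl | rfl | rfl | rfl | rfl | rfl)
    · exact ⟨T.t, T.t_mem hQ₂, by linear_combination T.u_sq_mul_z⟩
    · exact ⟨T.u * (T.u * (P.map _).c), Q₂.mul_mem_right _ hu,
        by linear_combination T.u ^ 2 * T.z_mul_τ⟩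
    · exact ⟨T.u * T.ζ, Q₂.mul_mem_right _ hu, by linear_combination T.u * T.z_sq⟩
    · exact ⟨T.a * T.z, Q₂.mul_mem_left _ hz, by linear_combination T.z * T.u_pow_three⟩
    · exact ⟨T.u * (T.u ^ 2 * (P.map _).c), Q₂.mul_mem_right _ hu,
        by linear_combination T.u ^ 3 * T.z_mul_τ⟩
    · exact ⟨T.u * (T.u * T.ζ), Q₂.mul_mem_right _ hu, by linear_combination T.u ^ 2 * T.z_sq⟩
  refine isSMulRegular_quotient_span_insert (map_ofNat _ 3) isSMulRegular_three hQ₂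
    (Q₂.pow_mem_of_mem hu 2 two_pos) ?_ (e' := T.a) (by linear_combination T.u_pow_three) ha₂ ?_
  · rintro n (rfl | rfl | rfl | rfl | rfl)
    · exact ⟨T.a * T.τ, Q₂.mul_mem_left _ hτ₂, by linear_combination T.τ * T.u_pow_three⟩
    · exact ⟨T.t, T.t_mem hQ₂, by linear_combination T.u_sq_mul_z⟩
    · exact ⟨T.u * T.a, Q₂.mul_mem_right _ hu, by linear_combination T.u * T.u_pow_three⟩
    · exact ⟨T.u * (T.a * T.τ), Q₂.mul_mem_right _ hu,
        by linear_combination T.u * T.τ * T.u_pow_three⟩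
    · exact ⟨T.a * T.z, Q₂.mul_mem_left _ hz, by linear_combination T.z * T.u_pow_three⟩
  refine isSMulRegular_quotient_span_insert (map_ofNat _ 3) isSMulRegular_three hQ₁
    (Q₁.pow_mem_of_mem (T.u_mem hQ₁) 2 two_pos) ?_ (e' := T.a * T.τ)
    (by linear_combination T.τ * T.u_pow_three) (‹Q₁.IsPrime›.mul_notMem ha₁ hτ₁)
    (T.isSMulRegular_quotient_span_insert_z hQ₁ ha₁ hτ₁ hQ₂ ha₂ hζ₂ hτ₂)
  have hu := T.u_mem hQ₁
  rintro n (rfl | rfl | rfl | rfl)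
  · exact ⟨T.t, T.t_mem hQ₁, by linear_combination T.u_sq_mul_z⟩
  · exact ⟨T.u * T.a, Q₁.mul_mem_right _ hu, by linear_combination T.u * T.u_pow_three⟩
  · exact ⟨T.u * (T.a * T.τ), Q₁.mul_mem_right _ hu,
      by linear_combination T.u * T.τ * T.u_pow_three⟩
  · exact ⟨T.a * T.z, Q₁.mul_mem_left _ (T.z_mem hQ₁), by linear_combination T.z * T.u_pow_three⟩

/-- An `S`-lattice in `B` stable under multiplication by `u` and containing the powers of
`θ = z + h`. It is saturated with respect to `3` and serves to bound `B` from above. -/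
def innerLattice : Submodule S B :=
  Submodule.span S {1, T.τ, T.t, T.u, T.u * T.τ, T.z, T.u ^ 2, T.u ^ 2 * T.τ, T.u * T.z}

theorem isSMulRegular_quotient_innerLattice_of_isPrime
    (hQ₁ : Q₁.comap (algebraMap S B) = Ideal.span {3}) (ha₁ : T.a ∉ Q₁) (hτ₁ : T.τ ∉ Q₁)
    (hQ₂ : Q₂.comap (algebraMap S B) = Ideal.span {3}) (ha₂ : T.a ∉ Q₂) (hζ₂ : T.ζ ∉ Q₂)
    (hτ₂ : T.τ ∈ Q₂) : IsSMulRegular (B ⧸ T.innerLattice) (3 : S) := by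
  have hmem (Q : Ideal B) [Q.IsPrime] (hQ : Q.comap (algebraMap S B) = Ideal.span {3}) {n : B}
      (hn : n ∈ ({T.t, T.u, T.u * T.τ, T.z, T.u ^ 2, T.u ^ 2 * T.τ, T.u * T.z} : Set B)) :
      n ∈ Q := by
    have hu := T.u_mem hQ
    have hu2 := Q.pow_mem_of_mem hu 2 two_pos
    rcases hn with rfl | rfl | rfl | rfl | rfl | rfl | rfl
    exacts [T.t_mem hQ, hu, Q.mul_mem_right _ hu, T.z_mem hQ, hu2, Q.mul_mem_right _ hu2,
      Q.mul_mem_right _ hu]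
  refine isSMulRegular_quotient_span_insert (map_ofNat _ 3) isSMulRegular_three hQ₂
    (three_mem hQ₂) ?_ rfl ((Ideal.ne_top_iff_one Q₂).1 ‹Q₂.IsPrime›.ne_top) ?_
  · rintro n (rfl | hn)
    exacts [⟨T.τ, hτ₂, rfl⟩, ⟨n, hmem Q₂ hQ₂ hn, rfl⟩]
  exact isSMulRegular_quotient_span_insert (map_ofNat _ 3) isSMulRegular_three hQ₁
    (three_mem hQ₁) (fun n hn ↦ ⟨n, hmem Q₁ hQ₁ hn, rfl⟩) rfl hτ₁
    (T.isSMulRegular_quotient_span_insert_t hQ₁ ha₁ hτ₁ hQ₂ ha₂ hζ₂ hτ₂)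

end Saturation

theorem isSMulRegular_quotient_innerLattice (h3 : Prime (3 : S)) (hα : ¬3 ∣ P.α) (hh : ¬3 ∣ P.h)
    (L : Type*) [Field L] [CharZero L] [Algebra S L] [IsFractionRing S L]
    (hL : ∀ b : L, b ^ 3 ≠ algebraMap S L (P.f * P.g)) :
    IsSMulRegular (B ⧸ T.innerLattice) (3 : S) := by
  obtain ⟨Q₁, _, hQ₁, hτ₁⟩ := T.exists_isPrime_τ_sub_mem h3 L hL
  obtain ⟨Q₂, _, hQ₂, hτ₂⟩ := T.exists_isPrime_τ_mem h3 L hL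
  exact T.isSMulRegular_quotient_innerLattice_of_isPrime hQ₁ (T.a_notMem hQ₁ hα)
    (T.τ_notMem hQ₁ hh hτ₁) hQ₂ (T.a_notMem hQ₂ hα) (T.ζ_notMem hQ₂ hh hτ₂) hτ₂

end Thirds

end CubicPair

section MulMem

variable {S B : Type*} [CommRing S] [CommRing B] [Algebra S B] {N : Submodule S B} {m : B}

theorem algebraMap_mul_mem (s : S) (hm : m ∈ N) : algebraMap S B s * m ∈ N :=
  Algebra.smul_def s m ▸ N.smul_mem s hm

theorem three_mul_mem (hm : m ∈ N) : 3 * m ∈ N := by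
  simpa only [map_ofNat] using algebraMap_mul_mem (3 : S) hm

theorem add_algebraMap_pow_mul_mem {b : B} (hb : ∀ m ∈ N, b * m ∈ N) (s : S) (k : ℕ)
    (hm : m ∈ N) : (b + algebraMap S B s) ^ k * m ∈ N := by
  induction k with
  | zero => simpa using hm
  | succ k ih =>
    rw [pow_succ', mul_assoc, add_mul]
    exact add_mem (hb _ ih) (algebraMap_mul_mem s ih)

end MulMem

/-- Three elements which generate a strictly increasing chain of three nonzero prime ideals. -/
structure IsPrimeTriple {S : Type*} [CommRing S] (a b c : S) : Prop where
  prime : Prime a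
  not_dvd : ¬a ∣ b
  isPrime_span_pair : (Ideal.span {a, b}).IsPrime
  notMem_span_pair : c ∉ Ideal.span {a, b}
  isPrime_span_triple : (Ideal.span {a, b, c}).IsPrime

theorem IsPrimeTriple.not_dvd_right {S : Type*} [CommRing S] {a b c : S}
    (h : IsPrimeTriple a b c) : ¬a ∣ c :=
  fun hac ↦ h.notMem_span_pair (Ideal.mem_of_dvd _ hac (Ideal.subset_span (by simp)))

namespace CubicPair.Thirds

variable {S B : Type*} [CommRing S] [CommRing B] [Algebra S B] {P : CubicPair S}
  (T : (P.map (algebraMap S B)).Thirds)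

/-- The ten generators of the integral closure. -/
def generators : Fin 10 → B :=
  ![1, T.u, T.v, T.u ^ 2, T.u * T.v, T.v ^ 2, T.p, T.q, T.r, T.σ]

/-- The `S`-lattice spanned by the ten generators; it turns out to be all of `B`. -/
def outerLattice : Submodule S B := Submodule.span S (Set.range T.generators)

theorem generators_mem (i : Fin 10) : T.generators i ∈ T.outerLattice :=
  Submodule.subset_span ⟨i, rfl⟩

theorem a_mul_mem {N : Submodule S B} {m : B} (hm : m ∈ N) (hu : T.u * m ∈ N)
    (hu2 : T.u ^ 2 * m ∈ N) : T.a * m ∈ N := by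
  convert sub_mem (sub_mem (algebraMap_mul_mem P.α hm) (algebraMap_mul_mem P.x hu2))
    (algebraMap_mul_mem (P.x ^ 2) hu) using 1
  simp only [a, map_α, map_x, map_pow]
  ring

theorem a_mem_outerLattice : T.a ∈ T.outerLattice := by
  have h := T.a_mul_mem (T.generators_mem 0)
    ((mul_one T.u).symm ▸ T.generators_mem 1) ((mul_one (T.u ^ 2)).symm ▸ T.generators_mem 3)
  exact mul_one T.a ▸ h

theorem a_mul_v_mem_outerLattice : T.a * T.v ∈ T.outerLattice :=
  T.a_mul_mem (T.generators_mem 2) (T.generators_mem 4)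
    (T.three_mul_p ▸ three_mul_mem (T.generators_mem 6))

theorem a_mul_v_sq_mem_outerLattice : T.a * T.v ^ 2 ∈ T.outerLattice :=
  T.a_mul_mem (T.generators_mem 5) (T.three_mul_q ▸ three_mul_mem (T.generators_mem 7))
    (T.three_mul_r ▸ three_mul_mem (T.generators_mem 8))

theorem theta_pow_mem_innerLattice (j : Fin 3) :
    ((T.u + algebraMap S B P.x) * (T.v + algebraMap S B P.y)) ^ (j : ℕ) ∈ T.innerLattice := by
  have h1 : 1 ∈ T.innerLattice := Submodule.subset_span (by simp)
  have hτ : T.τ ∈ T.innerLattice := Submodule.subset_span (by simp)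
  have hz : T.z ∈ T.innerLattice := Submodule.subset_span (by simp)
  have hθ : T.z + algebraMap S B P.h ∈ T.innerLattice :=
    add_mem hz (by simpa using algebraMap_mul_mem P.h h1)
  have hθz := T.theta_eq
  rw [map_x, map_y, map_h] at hθz
  rw [hθz]
  fin_cases j
  · simpa using h1
  · simpa using hθ
  · change _ ^ 2 ∈ T.innerLattice
    have hθ2 := sub_mem (sub_mem (three_mul_mem hτ) (algebraMap_mul_mem P.h hθ))
      (algebraMap_mul_mem (P.h ^ 2) h1)
    convert hθ2 using 1
    have h3τ := T.three_mul_τ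
    rw [map_x, map_y, map_h, hθz] at h3τ
    rw [map_pow]
    linear_combination -h3τ

theorem linearCombination_generators (m : Fin 10 → S) :
    Fintype.linearCombination S T.generators m =
      algebraMap S B (m 0) + algebraMap S B (m 1) * T.u + algebraMap S B (m 2) * T.v +
      algebraMap S B (m 3) * T.u ^ 2 + algebraMap S B (m 4) * (T.u * T.v) +
      algebraMap S B (m 5) * T.v ^ 2 + algebraMap S B (m 6) * T.p + algebraMap S B (m 7) * T.q +
      algebraMap S B (m 8) * T.r + algebraMap S B (m 9) * T.σ := by
  simp [Fintype.linearCombination_apply, Fin.sum_univ_succ, generators, Algebra.smul_def,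
    add_assoc]

theorem linearCombination_generators_relationVector :
    Fintype.linearCombination S T.generators P.relationVector = 0 := by
  have hσ := T.three_mul_σ
  rw [map_x, map_y] at hσ
  rw [linearCombination_generators]
  simp only [relationVector, Matrix.cons_val, map_zero, map_neg, map_mul, map_pow, map_ofNat]
  linear_combination hσ

variable {T} in
theorem coeff_eq_zero_of_linearCombination_generators_eq_zero
    (hli : LinearIndependent S fun i : Fin 3 × Fin 3 ↦ T.u ^ (i.1 : ℕ) * T.v ^ (i.2 : ℕ))
    {m : Fin 10 → S} (hm : Fintype.linearCombination S T.generators m = 0) :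
    !![3 * m 0, 3 * m 2, 3 * m 5 + P.x ^ 2 * m 9;
      3 * m 1, 3 * m 4 + 2 * P.x * P.y * m 9, m 7;
      3 * m 3 + P.y ^ 2 * m 9, m 6, m 8] = 0 := by
  ext i j
  refine Fintype.linearIndependent_iff.1 hli (fun k ↦ Matrix.of _ k.1 k.2) ?_ (i, j)
  have hσ := T.three_mul_σ
  rw [map_x, map_y] at hσ
  rw [linearCombination_generators] at hm
  simp only [Matrix.of_apply, Matrix.cons_val', Matrix.cons_val_fin_one, Algebra.smul_def,
    Fintype.sum_prod_type, Fin.sum_univ_three, Matrix.cons_val_zero, Fin.coe_ofNat_eq_mod,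
    Nat.zero_mod, pow_zero, mul_one, Matrix.cons_val_one, Nat.one_mod, pow_one, Matrix.cons_val,
    Nat.mod_succ, one_mul, map_mul, map_add, map_pow, map_ofNat]
  linear_combination 3 * hm - algebraMap S B (m 6) * T.three_mul_p -
    algebraMap S B (m 7) * T.three_mul_q - algebraMap S B (m 8) * T.three_mul_r -
    algebraMap S B (m 9) * hσ

variable {T} in
theorem ker_linearCombination_generators [IsDomain S]
    (hli : LinearIndependent S fun i : Fin 3 × Fin 3 ↦ T.u ^ (i.1 : ℕ) * T.v ^ (i.2 : ℕ))
    (h3 : Prime (3 : S)) (hy : ¬3 ∣ P.y) :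
    LinearMap.ker (Fintype.linearCombination S T.generators) =
      Submodule.span S {P.relationVector} := by
  refine le_antisymm (fun m hm ↦ ?_) ((Submodule.span_singleton_le_iff_mem _ _).2
    (LinearMap.mem_ker.2 T.linearCombination_generators_relationVector))
  have hcoeff := coeff_eq_zero_of_linearCombination_generators_eq_zero hli (LinearMap.mem_ker.1 hm)
  simp only [← Matrix.ext_iff, Fin.forall_fin_succ, IsEmpty.forall_iff, and_true, Matrix.of_apply,
    Matrix.cons_val_zero, Matrix.cons_val_succ, Matrix.zero_apply] at hcoeff
  obtain ⟨⟨h0, h2, h5⟩, ⟨h1, h4, h7⟩, h3', h6, h8⟩ := hcoeff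
  have hy2 : 3 ∣ P.y ^ 2 * m 9 := ⟨-m 3, by linear_combination h3'⟩
  obtain ⟨d, hd⟩ := (h3.dvd_or_dvd hy2).resolve_left fun h ↦ hy (h3.dvd_of_dvd_pow h)
  refine Submodule.mem_span_singleton.2 ⟨d, funext fun i ↦ mul_left_cancel₀ h3.ne_zero ?_⟩
  rw [Pi.smul_apply, smul_eq_mul]
  fin_cases i <;>
    simp only [relationVector, Fin.reduceFinMk, Matrix.cons_val, Fin.zero_eta, Fin.mk_one]
  · linear_combination -h0
  · linear_combination -h1
  · linear_combination -h2
  · linear_combination -h3' + P.y ^ 2 * hd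
  · linear_combination -h4 + 2 * P.x * P.y * hd
  · linear_combination -h5 + P.x ^ 2 * hd
  · linear_combination -3 * h6
  · linear_combination -3 * h7
  · linear_combination -3 * h8
  · linear_combination -3 * hd

variable [IsDomain B] [CharZero B]

/-- The exchange of the two cube roots, over `S`. -/
def swapOver : (P.swap.map (algebraMap S B)).Thirds := T.swap

theorem outerLattice_swapOver : T.swapOver.outerLattice = T.outerLattice := by
  have hperm : Function.Surjective (![0, 2, 1, 5, 4, 3, 7, 6, 8, 9] : Fin 10 → Fin 10) := by decide
  have hgen : T.swapOver.generators = T.generators ∘ ![0, 2, 1, 5, 4, 3, 7, 6, 8, 9] := by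
    funext i
    fin_cases i
    exacts [rfl, rfl, rfl, rfl, mul_comm T.v T.u, rfl, rfl, rfl, T.swap_r, T.swap_σ]
  rw [outerLattice, hgen, hperm.range_comp, outerLattice]

theorem u_mul_generators_mem (i : Fin 10) : T.u * T.generators i ∈ T.outerLattice := by
  have ha := T.a_mem_outerLattice
  have hp : T.p ∈ T.outerLattice := T.generators_mem 6
  have hq : T.q ∈ T.outerLattice := T.generators_mem 7
  fin_cases i
  · exact (mul_one T.u).symm ▸ T.generators_mem 1
  · exact sq T.u ▸ T.generators_mem 3
  · exact T.generators_mem 4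
  · exact (pow_succ' T.u 2).symm.trans T.u_pow_three ▸ three_mul_mem ha
  · refine (?_ : T.u * (T.u * T.v) = 3 * T.p) ▸ three_mul_mem hp
    linear_combination -T.three_mul_p
  · exact T.three_mul_q ▸ three_mul_mem hq
  · exact T.u_mul_p ▸ T.a_mul_v_mem_outerLattice
  · exact T.u_mul_q ▸ T.generators_mem 8
  · exact T.u_mul_r ▸ T.a_mul_v_sq_mem_outerLattice
  · have h := add_mem (add_mem (algebraMap_mul_mem (P.y ^ 2) ha)
      (algebraMap_mul_mem (2 * P.x * P.y) hp)) (algebraMap_mul_mem (P.x ^ 2) hq)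
    change T.u * T.σ ∈ _
    rw [T.u_mul_σ]
    simpa [map_ofNat] using h

theorem u_mul_mem_outerLattice {m : B} (hm : m ∈ T.outerLattice) : T.u * m ∈ T.outerLattice := by
  have hle : T.outerLattice ≤ T.outerLattice.comap (LinearMap.mulLeft S T.u) :=
    Submodule.span_le.2 (Set.range_subset_iff.2 T.u_mul_generators_mem)
  exact hle hm

theorem v_mul_mem_outerLattice {m : B} (hm : m ∈ T.outerLattice) : T.v * m ∈ T.outerLattice := by
  rw [← T.outerLattice_swapOver] at hm ⊢
  exact T.swapOver.u_mul_mem_outerLattice hm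

theorem innerLattice_le_outerLattice : T.innerLattice ≤ T.outerLattice := by
  have hmul := fun {m} ↦ T.u_mul_mem_outerLattice (m := m)
  have h1 : 1 ∈ T.outerLattice := T.generators_mem 0
  have hu : T.u ∈ T.outerLattice := T.generators_mem 1
  have hu2 : T.u ^ 2 ∈ T.outerLattice := T.generators_mem 3
  have hp : T.p ∈ T.outerLattice := T.generators_mem 6
  have hz : T.z ∈ T.outerLattice :=
    add_mem (add_mem (T.generators_mem 4) (algebraMap_mul_mem P.x (T.generators_mem 2)))
      (algebraMap_mul_mem P.y hu)
  have hτ : T.τ ∈ T.outerLattice := by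
    have hσr := add_mem (T.generators_mem 9) (T.generators_mem 8)
    have h := add_mem (add_mem (add_mem (add_mem hσr
      (algebraMap_mul_mem (2 * P.x) (T.generators_mem 7)))
      (algebraMap_mul_mem (2 * P.y) hp)) (algebraMap_mul_mem P.h hz))
      (algebraMap_mul_mem (P.h ^ 2) h1)
    rw [T.τ_eq]
    simpa [generators, map_ofNat] using h
  have ht : T.t ∈ T.outerLattice := by
    convert add_mem (add_mem T.a_mul_v_mem_outerLattice
      (algebraMap_mul_mem P.y T.a_mem_outerLattice)) (algebraMap_mul_mem P.x hp) using 1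
    simp only [t, map_x, map_y]
    ring
  refine Submodule.span_le.2 ?_
  rintro m (rfl | rfl | rfl | rfl | rfl | rfl | rfl | rfl | rfl)
  exacts [h1, hτ, ht, hu, hmul hτ, hz, hu2,
    sq T.u ▸ (mul_assoc T.u T.u T.τ).symm ▸ hmul (hmul hτ), hmul hz]

theorem u_mul_mem_innerLattice {m : B} (hm : m ∈ T.innerLattice) : T.u * m ∈ T.innerLattice := by
  have hgen {n : B} (hn : n ∈ ({1, T.τ, T.t, T.u, T.u * T.τ, T.z, T.u ^ 2, T.u ^ 2 * T.τ,
      T.u * T.z} : Set B)) : n ∈ T.innerLattice := Submodule.subset_span hn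
  have hu : T.u ∈ T.innerLattice := hgen (by simp)
  have hu2 : T.u ^ 2 ∈ T.innerLattice := hgen (by simp)
  have huτ : T.u * T.τ ∈ T.innerLattice := hgen (by simp)
  have hu2τ : T.u ^ 2 * T.τ ∈ T.innerLattice := hgen (by simp)
  have huz : T.u * T.z ∈ T.innerLattice := hgen (by simp)
  have h3t : 3 * T.t ∈ T.innerLattice := three_mul_mem (hgen (by simp))
  have ha : T.a ∈ T.innerLattice := by
    simpa using T.a_mul_mem (m := 1) (hgen (by simp)) (by simpa using hu) (by simpa using hu2)
  have haz : T.a * T.z ∈ T.innerLattice :=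
    T.a_mul_mem (hgen (by simp)) huz (T.u_sq_mul_z ▸ h3t)
  have haτ : T.a * T.τ ∈ T.innerLattice := T.a_mul_mem (hgen (by simp)) huτ hu2τ
  have hle : T.innerLattice ≤ T.innerLattice.comap (LinearMap.mulLeft S T.u) := by
    refine Submodule.span_le.2 ?_
    rintro m (rfl | rfl | rfl | rfl | rfl | rfl | rfl | rfl | rfl) <;>
      simp only [Submodule.comap_coe, Set.mem_preimage, LinearMap.mulLeft_apply, SetLike.mem_coe]
    · rwa [mul_one]
    · exact huτ
    · rwa [T.u_mul_t]
    · rwa [← sq]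
    · rwa [← mul_assoc, ← sq]
    · exact huz
    · rw [← pow_succ', T.u_pow_three]
      exact three_mul_mem ha
    · rw [← mul_assoc, ← pow_succ', T.u_pow_three, mul_assoc]
      exact three_mul_mem haτ
    · rwa [← mul_assoc, ← sq, T.u_sq_mul_z]
  exact hle hm

theorem f_smul_pow_mul_pow_mem_innerLattice (i : Fin 3 × Fin 3) :
    P.f • ((T.u + algebraMap S B P.x) ^ (i.1 : ℕ) * (T.v + algebraMap S B P.y) ^ (i.2 : ℕ)) ∈
      T.innerLattice := by
  obtain ⟨⟨i, hi⟩, j⟩ := i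
  obtain ⟨k, hk⟩ := Nat.exists_eq_add_of_le (show (j : ℕ) ≤ i + 3 by lia)
  convert add_algebraMap_pow_mul_mem (fun _ ↦ T.u_mul_mem_innerLattice) P.x k
    (T.theta_pow_mem_innerLattice j) using 1
  rw [Algebra.smul_def, ← map_f, ← T.add_pow_left, map_x, mul_pow, ← mul_assoc, ← mul_assoc,
    ← pow_add, ← pow_add, add_comm 3, hk, add_comm k]

theorem pow_mul_pow_mem_outerLattice (i : Fin 3 × Fin 3) :
    (T.u + algebraMap S B P.x) ^ (i.1 : ℕ) * (T.v + algebraMap S B P.y) ^ (i.2 : ℕ) ∈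
      T.outerLattice := by
  have h1 : 1 ∈ T.outerLattice := T.generators_mem 0
  exact add_algebraMap_pow_mul_mem (fun _ ↦ T.u_mul_mem_outerLattice) P.x _ <| by
    simpa using add_algebraMap_pow_mul_mem (fun _ ↦ T.v_mul_mem_outerLattice) P.y i.2 h1

theorem mem_outerLattice_of_smul_mem (hP : IsPrimeTriple 3 P.x P.y)
    (hker : LinearMap.ker (Fintype.linearCombination S T.generators) =
      Submodule.span S {P.relationVector})
    {w : B} (h3w : (3 : S) • w ∈ T.outerLattice) (hfw : P.f • w ∈ T.outerLattice) :
    w ∈ T.outerLattice := by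
  let φ := (Fintype.linearCombination S T.generators).codRestrict T.outerLattice fun m ↦ by
    simpa only [outerLattice, ← Fintype.range_linearCombination] using LinearMap.mem_range_self _ m
  have hφ : Function.Surjective φ := fun ⟨w, hw⟩ ↦ by
    rw [outerLattice, ← Fintype.range_linearCombination] at hw
    exact hw.imp fun m hm ↦ Subtype.ext hm
  have hkerφ : LinearMap.ker φ = Submodule.span S {P.relationVector} := by
    rw [LinearMap.ker_codRestrict, hker]
  have hi : P.relationVector 3 ∉ Ideal.span {3, P.x} := fun hi ↦
    hP.notMem_span_pair (hP.isPrime_span_pair.mem_of_pow_mem 2 (neg_mem_iff.1 hi))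
  obtain ⟨m, hm⟩ := exists_eq_smul_of_pow_smul_eq_smul hφ hkerφ hP.prime hP.not_dvd
    hP.isPrime_span_pair hi 3 (a := ⟨_, h3w⟩) (b := ⟨_, hfw⟩ - P.α • ⟨_, h3w⟩) <| by
      ext
      simp only [SetLike.val_smul, AddSubgroupClass.coe_sub, f]
      module
  have h3B : (3 : S) • w = (3 : S) • (m : B) := congrArg Subtype.val hm
  simp only [Algebra.smul_def, map_ofNat] at h3B
  exact eq_of_three_mul_eq h3B ▸ m.2

theorem outerLattice_eq_top (hP : IsPrimeTriple 3 P.x P.y)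
    (hker : LinearMap.ker (Fintype.linearCombination S T.generators) =
      Submodule.span S {P.relationVector})
    (hsat : IsSMulRegular (B ⧸ T.innerLattice) (3 : S))
    (h9 : ∀ w : B, (9 : S) • w ∈ Submodule.span S (Set.range fun i : Fin 3 × Fin 3 ↦
      (T.u + algebraMap S B P.x) ^ (i.1 : ℕ) * (T.v + algebraMap S B P.y) ^ (i.2 : ℕ))) :
    T.outerLattice = ⊤ := by
  refine eq_top_iff.2 fun w _ ↦ ?_
  have h9w : (3 : S) • (3 : S) • w ∈ T.outerLattice := by
    rw [smul_smul, show (3 : S) * 3 = 9 by norm_num]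
    exact Submodule.span_le.2 (Set.range_subset_iff.2 T.pow_mul_pow_mem_outerLattice) (h9 w)
  have h9fw : (3 : S) • (3 : S) • P.f • w ∈ T.innerLattice := by
    rw [smul_smul, show (3 : S) * 3 = 9 by norm_num, smul_comm]
    have hle : Submodule.span S _ ≤ T.innerLattice.comap (LinearMap.lsmul S B P.f) :=
      Submodule.span_le.2 (Set.range_subset_iff.2 T.f_smul_pow_mul_pow_mem_innerLattice)
    exact hle (h9 w)
  have hmem := (isSMulRegular_quotient_iff_mem_of_smul_mem _ _).1 hsat
  have hfw := T.innerLattice_le_outerLattice (hmem _ (hmem _ h9fw))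
  refine T.mem_outerLattice_of_smul_mem hP hker (T.mem_outerLattice_of_smul_mem hP hker h9w ?_) hfw
  rw [smul_comm]
  exact T.outerLattice.smul_mem 3 hfw

end CubicPair.Thirds

namespace CubicPair

namespace Thirds

theorem p_pow_three {B : Type*} [CommRing B] [IsDomain B] [CharZero B] {P : CubicPair B}
    (T : P.Thirds) : T.p ^ 3 = T.a ^ 2 * T.swap.a := by
  have h27 : 3 * (3 * (3 * T.p ^ 3)) = 3 * (3 * (3 * (T.a ^ 2 * T.swap.a))) :=
    calc 3 * (3 * (3 * T.p ^ 3)) = (3 * T.p) ^ 3 := by ring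
      _ = (T.u ^ 3) ^ 2 * T.v ^ 3 := by rw [T.three_mul_p]; ring
      _ = 3 * (3 * (3 * (T.a ^ 2 * T.swap.a))) := by rw [T.u_pow_three, T.v_pow_three]; ring
  exact eq_of_three_mul_eq (eq_of_three_mul_eq (eq_of_three_mul_eq h27))

variable {S B : Type*} [CommRing S] [CommRing B] [Algebra S B]
  {P : CubicPair S} (T : (P.map (algebraMap S B)).Thirds)

theorem isIntegral_u : IsIntegral S T.u := by
  have hω : IsIntegral S (T.u + algebraMap S B P.x) := .of_pow three_pos <| by
    rw [← map_x, T.add_pow_left, map_f]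
    exact isIntegral_algebraMap
  simpa using hω.sub (isIntegral_algebraMap (x := P.x))

theorem isIntegral_v : IsIntegral S T.v :=
  T.swapOver.isIntegral_u

theorem isIntegral_a : IsIntegral S T.a := by
  have h (s : S) : IsIntegral S (algebraMap S B s) := isIntegral_algebraMap
  exact ((h _).sub ((h _).mul (T.isIntegral_u.pow 2))).sub (((h _).pow 2).mul T.isIntegral_u)

variable [IsDomain B] [CharZero B]

theorem isIntegral_p : IsIntegral S T.p :=
  .of_pow three_pos (T.p_pow_three ▸ (T.isIntegral_a.pow 2).mul T.swapOver.isIntegral_a)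

theorem isIntegral_q : IsIntegral S T.q :=
  T.swapOver.isIntegral_p

theorem isIntegral_τ : IsIntegral S T.τ :=
  ⟨P.cubic, P.monic_cubic, aeval_τ_cubic T⟩

end Thirds

variable {S K : Type*} [CommRing S] [Field K] [CharZero K] [Algebra S K] {P : CubicPair S} {ω μ : K}

/-- The elements of `Thirds`, in a field that contains the cube roots `ω` of `f` and `μ` of `g`. -/
@[simps]
def thirdsOfField (hω : ω ^ 3 = algebraMap S K P.f) (hμ : μ ^ 3 = algebraMap S K P.g) :
    (P.map (algebraMap S K)).Thirds where
  u := ω - algebraMap S K P.x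
  v := μ - algebraMap S K P.y
  p := (ω - algebraMap S K P.x) ^ 2 * (μ - algebraMap S K P.y) / 3
  q := (ω - algebraMap S K P.x) * (μ - algebraMap S K P.y) ^ 2 / 3
  τ := ((ω * μ) ^ 2 + algebraMap S K P.h * (ω * μ) + algebraMap S K P.h ^ 2) / 3
  add_pow_left := by simpa using hω
  add_pow_right := by simpa using hμ
  three_mul_p := by ring
  three_mul_q := by ring
  three_mul_τ := by
    simp only [map_x, map_y, map_h, sub_add_cancel]
    ring

/-- The elements of `thirdsOfField`, in the integral closure. -/
def thirdsOfIntegralClosure (hω : ω ^ 3 = algebraMap S K P.f) (hμ : μ ^ 3 = algebraMap S K P.g) :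
    (P.map (algebraMap S (integralClosure S K))).Thirds where
  u := ⟨_, (thirdsOfField hω hμ).isIntegral_u⟩
  v := ⟨_, (thirdsOfField hω hμ).isIntegral_v⟩
  p := ⟨_, (thirdsOfField hω hμ).isIntegral_p⟩
  q := ⟨_, (thirdsOfField hω hμ).isIntegral_q⟩
  τ := ⟨_, (thirdsOfField hω hμ).isIntegral_τ⟩
  add_pow_left := Subtype.ext (thirdsOfField hω hμ).add_pow_left
  add_pow_right := Subtype.ext (thirdsOfField hω hμ).add_pow_right
  three_mul_p := Subtype.ext (thirdsOfField hω hμ).three_mul_p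
  three_mul_q := Subtype.ext (thirdsOfField hω hμ).three_mul_q
  three_mul_τ := Subtype.ext (thirdsOfField hω hμ).three_mul_τ

end CubicPair

namespace IsBicubic

variable {S L K : Type*} [CommRing S] [IsDomain S] [IsIntegrallyClosed S] [Field L] [CharZero L]
  [Field K] [CharZero K] [Algebra S L] [IsFractionRing S L] [Algebra L K] [Algebra S K]
  [IsScalarTower S L K] {P : CubicPair S} {ω μ : K} (h : IsBicubic L P.f P.g ω μ)

/-- The elements of `Thirds` in the integral closure attached to a bicubic extension. -/
def thirds : (P.map (algebraMap S (integralClosure S K))).Thirds :=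
  CubicPair.thirdsOfIntegralClosure h.pow_left h.pow_right

theorem linearIndependent_u_pow_mul_v_pow :
    LinearIndependent S fun i : Fin 3 × Fin 3 ↦
      h.thirds.u ^ (i.1 : ℕ) * h.thirds.v ^ (i.2 : ℕ) := by
  obtain ⟨e, he⟩ := h.exists_basis_sub_pow_mul_sub_pow (algebraMap S L P.x) (algebraMap S L P.y)
  have hval : (integralClosure S K).val.toLinearMap ∘
      (fun i : Fin 3 × Fin 3 ↦ h.thirds.u ^ (i.1 : ℕ) * h.thirds.v ^ (i.2 : ℕ)) = e := by
    funext i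
    simp [he, thirds, CubicPair.thirdsOfIntegralClosure, ← IsScalarTower.algebraMap_apply]
  refine .of_comp (integralClosure S K).val.toLinearMap ?_
  rw [hval]
  exact (LinearIndependent.iff_fractionRing S L).2 e.linearIndependent

theorem nine_smul_mem_span_thirds (w : integralClosure S K) :
    (9 : S) • w ∈ Submodule.span S (Set.range fun i : Fin 3 × Fin 3 ↦
      (h.thirds.u + algebraMap S _ P.x) ^ (i.1 : ℕ) *
        (h.thirds.v + algebraMap S _ P.y) ^ (i.2 : ℕ)) := by
  have hmem := h.nine_smul_mem_span w.2
  have hval (i : Fin 3 × Fin 3) : ω ^ (i.1 : ℕ) * μ ^ (i.2 : ℕ) =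
      (integralClosure S K).val.toLinearMap ((h.thirds.u + algebraMap S _ P.x) ^ (i.1 : ℕ) *
        (h.thirds.v + algebraMap S _ P.y) ^ (i.2 : ℕ)) := by
    simp [thirds, CubicPair.thirdsOfIntegralClosure]
  simp only [hval] at hmem
  rw [Set.range_comp', ← Submodule.map_span] at hmem
  obtain ⟨m, hm, hmw⟩ := hmem
  exact (Subtype.ext hmw : m = (9 : S) • w) ▸ hm

theorem ker_linearCombination_generators (hP : IsPrimeTriple 3 P.x P.y) :
    LinearMap.ker (Fintype.linearCombination S h.thirds.generators) =
      Submodule.span S {P.relationVector} :=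
  CubicPair.Thirds.ker_linearCombination_generators h.linearIndependent_u_pow_mul_v_pow hP.prime
    hP.not_dvd_right

theorem linearCombination_generators_surjective (hP : IsPrimeTriple 3 P.x P.y) (hα : ¬3 ∣ P.α) :
    Function.Surjective (Fintype.linearCombination S h.thirds.generators) := by
  have hh : ¬3 ∣ P.h := hP.prime.not_dvd_mul hP.not_dvd hP.not_dvd_right
  have : FaithfulSMul S K := .trans S L K
  have hsat := h.thirds.isSMulRegular_quotient_innerLattice hP.prime hα hh L <|
    pow_ne_algebraMap_mul_of_prime (by norm_num) h.prime_left h.not_left_dvd_right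
  rw [← LinearMap.range_eq_top, Fintype.range_linearCombination]
  exact h.thirds.outerLattice_eq_top hP (h.ker_linearCombination_generators hP) hsat
    h.nine_smul_mem_span_thirds

end IsBicubic

theorem isPrime_of_isPrime_comap_of_forall_exists_sub_mem {A B : Type*} [CommRing A]
    [CommRing B] {φ : A →+* B} {Q : Ideal B} (hQ : (Q.comap φ).IsPrime)
    (hφ : ∀ b, ∃ s, b - φ s ∈ Q) : Q.IsPrime := by
  refine ⟨fun h ↦ hQ.ne_top (h ▸ Ideal.comap_top), fun {b c} hbc ↦ ?_⟩
  obtain ⟨s, hs⟩ := hφ b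
  obtain ⟨t, ht⟩ := hφ c
  have hst : s * t ∈ Q.comap φ := by
    rw [Ideal.mem_comap, map_mul]
    convert sub_mem hbc (add_mem (Q.mul_mem_right c hs) (Q.mul_mem_left (φ s) ht)) using 1
    ring
  exact (hQ.mem_or_mem hst).imp (Q.sub_mem_iff_left · |>.1 hs) (Q.sub_mem_iff_left · |>.1 ht)

theorem IsPrimeTriple.three_le_height {S : Type*} [CommRing S] [IsDomain S] {a b c : S}
    (h : IsPrimeTriple a b c) : 3 ≤ (Ideal.span {a, b, c}).height := by
  have := h.isPrime_span_pair
  have := h.isPrime_span_triple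
  have hprime : (Ideal.span {a}).IsPrime :=
    (Ideal.span_singleton_prime h.prime.ne_zero).2 h.prime
  have h1 : ⊥ < Ideal.span {a} :=
    bot_lt_iff_ne_bot.2 (Ideal.span_singleton_eq_bot.not.2 h.prime.ne_zero)
  have h2 : Ideal.span {a} < Ideal.span {a, b} :=
    SetLike.lt_iff_le_and_exists.2 ⟨Ideal.span_mono (by simp), b, Ideal.subset_span (by simp),
      fun hb ↦ h.not_dvd (Ideal.mem_span_singleton.1 hb)⟩
  have h3 : Ideal.span {a, b} < Ideal.span {a, b, c} :=
    SetLike.lt_iff_le_and_exists.2 ⟨Ideal.span_mono (Set.insert_subset_insert (by simp)), c,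
      Ideal.subset_span (by simp), h.notMem_span_pair⟩
  calc (3 : ℕ∞) = 0 + 1 + 1 + 1 := by norm_num
    _ ≤ (⊥ : Ideal S).height + 1 + 1 + 1 := by gcongr; exact zero_le
    _ ≤ (Ideal.span {a}).height + 1 + 1 := by
      gcongr; exact Ideal.height_add_one_le_of_lt_of_isPrime h1
    _ ≤ (Ideal.span {a, b}).height + 1 := by
      gcongr; exact Ideal.height_add_one_le_of_lt_of_isPrime h2
    _ ≤ _ := Ideal.height_add_one_le_of_lt_of_isPrime h3

namespace CubicPair.Thirds

variable {S B : Type*} [CommRing S] [CommRing B] [Algebra S B] {P : CubicPair S}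
  (T : (P.map (algebraMap S B)).Thirds)

/-- The annihilator of the class of `y * u ^ 2` in the quotient of `B` by `(3, x)`. -/
def socleIdeal : Ideal B :=
  (Ideal.span {3, algebraMap S B P.x}).colon {algebraMap S B P.y * T.u ^ 2}

theorem mem_socleIdeal {b : B} : b ∈ T.socleIdeal ↔
    ∃ c d, c * 3 + d * algebraMap S B P.x = b * (algebraMap S B P.y * T.u ^ 2) := by
  rw [socleIdeal, Submodule.mem_colon_singleton, smul_eq_mul, Ideal.mem_span_pair]

theorem le_socleIdeal : Ideal.span {3, algebraMap S B P.x} ≤ T.socleIdeal := fun b hb ↦ by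
  rw [socleIdeal, Submodule.mem_colon_singleton]
  exact Ideal.mul_mem_right _ _ hb

theorem y_mem_socleIdeal : algebraMap S B P.y ∈ T.socleIdeal :=
  T.mem_socleIdeal.2 ⟨T.σ, -(2 * algebraMap S B P.y * T.u * T.v + algebraMap S B P.x * T.v ^ 2), by
    have hσ := T.three_mul_σ
    rw [map_x, map_y] at hσ
    linear_combination hσ⟩

theorem u_mem_socleIdeal : T.u ∈ T.socleIdeal :=
  T.mem_socleIdeal.2 ⟨algebraMap S B P.y * T.a, 0, by
    linear_combination -algebraMap S B P.y * T.u_pow_three⟩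

theorem v_mem_socleIdeal : T.v ∈ T.socleIdeal :=
  T.mem_socleIdeal.2 ⟨algebraMap S B P.y * T.p, 0, by
    linear_combination algebraMap S B P.y * T.three_mul_p⟩

variable {T} in
theorem mem_span_of_algebraMap_mem_socleIdeal (hP : IsPrimeTriple 3 P.x P.y)
    (hφ : Function.Surjective (Fintype.linearCombination S T.generators))
    (hker : LinearMap.ker (Fintype.linearCombination S T.generators) =
      Submodule.span S {P.relationVector}) {s : S} (hs : algebraMap S B s ∈ T.socleIdeal) :
    s ∈ Ideal.span {3, P.x, P.y} := by
  obtain ⟨b, c, hbc⟩ := T.mem_socleIdeal.1 hs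
  obtain ⟨m, rfl⟩ := hφ b
  obtain ⟨n, rfl⟩ := hφ c
  have hmem : (3 : S) • m + P.x • n - (s * P.y) • Pi.single 3 1 ∈
      LinearMap.ker (Fintype.linearCombination S T.generators) := by
    rw [LinearMap.mem_ker, map_sub, map_add, map_smul, map_smul, map_smul,
      Fintype.linearCombination_apply_single]
    have hu : T.generators 3 = T.u ^ 2 := rfl
    simp only [Algebra.smul_def, map_mul, map_one, map_ofNat, hu]
    linear_combination hbc
  rw [hker, Submodule.mem_span_singleton] at hmem
  obtain ⟨d, hd⟩ := hmem
  replace hd : d * -P.y ^ 2 = 3 * m 3 + P.x * n 3 - s * P.y := by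
    simpa [relationVector] using congrFun hd 3
  have hsd : s - d * P.y ∈ Ideal.span {3, P.x} := by
    refine (hP.isPrime_span_pair.mem_or_mem ?_).resolve_right hP.notMem_span_pair
    exact Ideal.mem_span_pair.2 ⟨m 3, n 3, by linear_combination -hd⟩
  obtain ⟨k, l, hkl⟩ := Ideal.mem_span_pair.1 hsd
  exact Ideal.mem_span_insert.2 ⟨k, _, Ideal.mem_span_pair.2 ⟨l, d, rfl⟩,
    by linear_combination -hkl⟩

variable {T} in
theorem comap_socleIdeal (hP : IsPrimeTriple 3 P.x P.y)
    (hφ : Function.Surjective (Fintype.linearCombination S T.generators))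
    (hker : LinearMap.ker (Fintype.linearCombination S T.generators) =
      Submodule.span S {P.relationVector}) :
    T.socleIdeal.comap (algebraMap S B) = Ideal.span {3, P.x, P.y} := by
  refine le_antisymm (fun s hs ↦ mem_span_of_algebraMap_mem_socleIdeal hP hφ hker hs) ?_
  have hle := T.le_socleIdeal
  rw [Ideal.span_le, Set.pair_subset_iff] at hle
  rw [Ideal.span_le, Set.insert_subset_iff, Set.pair_subset_iff]
  exact ⟨by simpa [map_ofNat] using hle.1, hle.2, T.y_mem_socleIdeal⟩

theorem a_mem_span (hα : P.α ∈ Ideal.span {3, P.x}) :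
    T.a ∈ Ideal.span {3, algebraMap S B P.x} := by
  obtain ⟨k, l, hkl⟩ := Ideal.mem_span_pair.1 hα
  refine Ideal.mem_span_pair.2
    ⟨algebraMap S B k, algebraMap S B l - T.u ^ 2 - algebraMap S B P.x * T.u, ?_⟩
  rw [a, map_α, map_x, ← hkl, map_add, map_mul, map_mul, map_ofNat]
  ring

variable [IsDomain B] [CharZero B]

theorem p_mem_socleIdeal (hα : P.α ∈ Ideal.span {3, P.x}) : T.p ∈ T.socleIdeal := by
  rw [socleIdeal, Submodule.mem_colon_singleton, smul_eq_mul]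
  convert Ideal.mul_mem_right (algebraMap S B P.y * T.u * T.v) _ (T.a_mem_span hα) using 1
  linear_combination algebraMap S B P.y * T.u * T.u_mul_p

theorem q_mem_socleIdeal (hα : P.α ∈ Ideal.span {3, P.x}) : T.q ∈ T.socleIdeal := by
  rw [socleIdeal, Submodule.mem_colon_singleton, smul_eq_mul]
  convert Ideal.mul_mem_right (algebraMap S B P.y * T.v ^ 2) _ (T.a_mem_span hα) using 1
  linear_combination algebraMap S B P.y * (T.u * T.u_mul_q + T.u_mul_r)

theorem σ_mem_socleIdeal (hα : P.α ∈ Ideal.span {3, P.x}) : T.σ ∈ T.socleIdeal := by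
  have hx : algebraMap S B P.x ∈ Ideal.span {3, algebraMap S B P.x} :=
    Ideal.subset_span (by simp)
  rw [socleIdeal, Submodule.mem_colon_singleton, smul_eq_mul]
  convert add_mem (Ideal.mul_mem_right (algebraMap S B P.y ^ 3 * T.u) _ (T.a_mem_span hα))
    (Ideal.mul_mem_right (algebraMap S B P.y * T.u * (2 * algebraMap S B P.y * T.p +
      algebraMap S B P.x * T.q)) _ hx) using 1
  have hσ := T.u_mul_σ
  rw [map_x, map_y] at hσ
  linear_combination algebraMap S B P.y * T.u * hσ

theorem linearCombination_generators_sub_mem_socleIdeal (hα : P.α ∈ Ideal.span {3, P.x})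
    (m : Fin 10 → S) :
    Fintype.linearCombination S T.generators m - algebraMap S B (m 0) ∈ T.socleIdeal := by
  have hu := T.u_mem_socleIdeal
  have hv := T.v_mem_socleIdeal
  have hgen (i : Fin 9) : T.generators i.succ ∈ T.socleIdeal := by
    fin_cases i
    exacts [hu, hv, Ideal.pow_mem_of_mem _ hu 2 two_pos, Ideal.mul_mem_right _ _ hu,
      Ideal.pow_mem_of_mem _ hv 2 two_pos, T.p_mem_socleIdeal hα, T.q_mem_socleIdeal hα,
      Ideal.mul_mem_left _ _ hv, T.σ_mem_socleIdeal hα]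
  rw [Fintype.linearCombination_apply, Fin.sum_univ_succ, Algebra.smul_def]
  simpa [generators] using sum_mem fun i _ ↦ Submodule.smul_of_tower_mem _ (m i.succ) (hgen i)

variable {T} in
theorem isPrime_socleIdeal (hP : IsPrimeTriple 3 P.x P.y) (hα : P.α ∈ Ideal.span {3, P.x})
    (hφ : Function.Surjective (Fintype.linearCombination S T.generators))
    (hker : LinearMap.ker (Fintype.linearCombination S T.generators) =
      Submodule.span S {P.relationVector}) : T.socleIdeal.IsPrime := by
  refine isPrime_of_isPrime_comap_of_forall_exists_sub_mem (φ := algebraMap S B)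
    (comap_socleIdeal hP hφ hker ▸ hP.isPrime_span_triple) fun b ↦ ?_
  obtain ⟨m, rfl⟩ := hφ b
  exact ⟨m 0, T.linearCombination_generators_sub_mem_socleIdeal hα m⟩

variable {T} in
theorem isWeaklyRegular_three_x (hP : IsPrimeTriple 3 P.x P.y)
    (hφ : Function.Surjective (Fintype.linearCombination S T.generators))
    (hker : LinearMap.ker (Fintype.linearCombination S T.generators) =
      Submodule.span S {P.relationVector}) :
    RingTheory.Sequence.IsWeaklyRegular B [3, algebraMap S B P.x] := by
  refine isWeaklyRegular_pair (OfNat.ofNat_ne_zero 3) fun c ⟨d, hd⟩ ↦ ?_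
  have hy : P.relationVector 3 ∉ Ideal.span {3, P.x} := by
    refine fun hmem ↦ hP.notMem_span_pair (hP.isPrime_span_pair.mem_of_pow_mem 2 ?_)
    simpa [relationVector] using hmem
  have h3 (b : B) : (3 : S) • b = 3 * b := by rw [Algebra.smul_def, map_ofNat]
  obtain ⟨e, he⟩ := exists_eq_smul_of_smul_eq_smul hφ hker hP.prime hP.not_dvd
    hP.isPrime_span_pair hy (a := c) (b := d) (by rw [h3, Algebra.smul_def, hd])
  exact ⟨e, he.trans (h3 e)⟩

variable [IsDomain S] [IsIntegrallyClosed S] [IsNoetherianRing S] [FaithfulSMul S B]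

variable {T} in
theorem not_isCMRing (hP : IsPrimeTriple 3 P.x P.y) (hα : P.α ∈ Ideal.span {3, P.x})
    (hφ : Function.Surjective (Fintype.linearCombination S T.generators))
    (hker : LinearMap.ker (Fintype.linearCombination S T.generators) =
      Submodule.span S {P.relationVector}) : ¬IsCMRing B := by
  have hfin : Module.Finite S B := .of_surjective _ hφ
  have hnoeth : IsNoetherianRing B := .of_finite S B
  have hprime := isPrime_socleIdeal hP hα hφ hker
  have hprime' := hP.isPrime_span_triple
  have hover : T.socleIdeal.LiesOver (Ideal.span {3, P.x, P.y}) :=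
    ⟨(comap_socleIdeal hP hφ hker).symm⟩
  have hass : T.socleIdeal ∈
      associatedPrimes B (B ⧸ Ideal.ofList [3, algebraMap S B P.x]) := by
    refine (isAssociatedPrime_iff ..).2
      ⟨hprime, Ideal.Quotient.mk _ (algebraMap S B P.y * T.u ^ 2), ?_⟩
    ext b
    rw [socleIdeal, Submodule.mem_colon_singleton, Submodule.mem_colon_singleton,
      Submodule.mem_bot, ← Ideal.Quotient.mk_eq_mk, ← Submodule.Quotient.mk_smul,
      Submodule.Quotient.mk_eq_zero, Ideal.ofList_cons, Ideal.ofList_singleton, Ideal.span_insert]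
  refine not_isCMRing_of_mem_associatedPrimes (isWeaklyRegular_three_x hP hφ hker) hass ?_
  calc (2 : ℕ∞) < 3 := by decide
    _ ≤ (Ideal.span {3, P.x, P.y}).height := hP.three_le_height
    _ ≤ T.socleIdeal.height := by
      rw [Ideal.height_eq_height_add_of_liesOver_of_hasGoingDown
        (Ideal.span {3, P.x, P.y}) T.socleIdeal]
      exact le_self_add

end CubicPair.Thirds

theorem pow_ne_div_of_prime {A F : Type*} [CommRing A] [IsDomain A] [IsIntegrallyClosed A] [Field F]
    [Algebra A F] [IsFractionRing A F] {n : ℕ} (hn : 2 ≤ n) {p a b : A} (hp : Prime p)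
    (ha : ¬p ∣ a) (hb : ¬p ∣ b) (r : F) :
    r ^ n ≠ algebraMap A F b / algebraMap A F (p * a) := by
  intro hr
  obtain ⟨k, rfl⟩ := Nat.exists_eq_add_of_le' hn
  have hb0 : algebraMap A F b ≠ 0 :=
    IsFractionRing.to_map_eq_zero_iff.not.2 fun h ↦ hb (h ▸ dvd_zero p)
  refine pow_ne_algebraMap_mul_of_prime hn hp
    (hp.not_dvd_mul ha fun h ↦ hb (hp.dvd_of_dvd_pow h)) (algebraMap A F b / r)
    (s := a * b ^ (k + 1)) ?_
  rw [div_pow, hr, ← mul_assoc, map_mul _ (p * a), map_pow]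
  field_simp
  ring

theorem irreducible_C_mul_X_pow_sub_C {A : Type*} [CommRing A] [IsDomain A]
    [IsIntegrallyClosed A] {n : ℕ} (hn : n.Prime) {p a b : A} (hp : Prime p) (ha : ¬p ∣ a)
    (hab : IsCoprime (p * a) b) :
    Irreducible (Polynomial.C (p * a) * Polynomial.X ^ n - Polynomial.C b) := by
  have hb : ¬p ∣ b := fun h ↦ hp.not_isUnit (hab.isUnit_of_dvd' (dvd_mul_right p a) h)
  have hprim : (Polynomial.C (p * a) * Polynomial.X ^ n - Polynomial.C b).IsPrimitive := by
    intro r hr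
    rw [Polynomial.C_dvd_iff_dvd_coeff] at hr
    exact hab.isUnit_of_dvd' (by simpa [Polynomial.coeff_C, hn.ne_zero, -map_mul] using hr n)
      (by simpa [hn.ne_zero.symm] using hr 0)
  refine hprim.irreducible_of_irreducible_map_of_injective
    (IsFractionRing.injective A (FractionRing A)) ?_
  have hpa : algebraMap A (FractionRing A) (p * a) ≠ 0 := IsFractionRing.to_map_eq_zero_iff.not.2
    (mul_ne_zero hp.ne_zero fun h ↦ ha (h ▸ dvd_zero p))
  have hmap : (Polynomial.C (p * a) * Polynomial.X ^ n - Polynomial.C b).map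
      (algebraMap A (FractionRing A)) = Polynomial.C (algebraMap A _ (p * a)) *
        (Polynomial.X ^ n - Polynomial.C (algebraMap A _ b / algebraMap A _ (p * a))) := by
    rw [mul_sub, ← Polynomial.C_mul, mul_div_cancel₀ _ hpa]
    simp
  rw [hmap, irreducible_isUnit_mul (Polynomial.isUnit_C.2 hpa.isUnit)]
  exact X_pow_sub_C_irreducible_of_prime hn (pow_ne_div_of_prime hn.two_le hp ha hb)

section MvPolynomial

variable {σ R : Type*} [CommRing R]

theorem prime_aeval_X (i : σ) {q : Polynomial R} (hq : Prime q) :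
    Prime (Polynomial.aeval (MvPolynomial.X i : MvPolynomial σ R) q) := by
  have h := (MvPolynomial.prime_rename_iff ({i} : Set σ)).2
    ((MulEquiv.prime_iff (MvPolynomial.uniqueAlgEquiv R ({i} : Set σ)).symm).2 hq)
  have haeval : Polynomial.aeval (MvPolynomial.X i : MvPolynomial σ R) =
      (MvPolynomial.rename ((↑) : ({i} : Set σ) → σ)).comp
        (MvPolynomial.uniqueAlgEquiv R ({i} : Set σ)).symm.toAlgHom := by
    ext1
    simp
  exact haeval ▸ h

theorem sub_aeval_update_X_zero_mem [DecidableEq σ] (i : σ) (q : MvPolynomial σ R) :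
    q - MvPolynomial.aeval (Function.update MvPolynomial.X i 0) q ∈
      Ideal.span {(MvPolynomial.X i : MvPolynomial σ R)} := by
  have hmk : Ideal.Quotient.mkₐ R (Ideal.span {(MvPolynomial.X i : MvPolynomial σ R)}) =
      (Ideal.Quotient.mkₐ R _).comp
        (MvPolynomial.aeval (Function.update MvPolynomial.X i 0)) := by
    ext j
    rcases eq_or_ne j i with rfl | hj
    · simp
    · simp [hj]
  exact Ideal.Quotient.eq.1 (DFunLike.congr_fun hmk q)

theorem span_C_X_eq_comap [DecidableEq σ] (p : R) (i : σ) :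
    Ideal.span {MvPolynomial.C p, MvPolynomial.X i} =
      (Ideal.span {(MvPolynomial.C p : MvPolynomial σ R)}).comap
        (MvPolynomial.aeval (Function.update MvPolynomial.X i 0) :
          MvPolynomial σ R →ₐ[R] MvPolynomial σ R) := by
  refine le_antisymm (Ideal.span_le.2 (Set.pair_subset ?_ ?_)) fun q hq ↦ ?_
  · simp [MvPolynomial.algebraMap_eq]
  · simp
  · rw [← sub_add_cancel q (MvPolynomial.aeval (Function.update MvPolynomial.X i 0) q)]
    exact add_mem (Ideal.span_mono (by simp) (sub_aeval_update_X_zero_mem i q))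
      (Ideal.span_mono (by simp) hq)

theorem isPrime_span_C_X {p : R} (hp : Prime p) (i : σ) :
    (Ideal.span {(MvPolynomial.C p : MvPolynomial σ R), MvPolynomial.X i}).IsPrime := by
  classical
  have hC : Prime (MvPolynomial.C p : MvPolynomial σ R) := (MvPolynomial.prime_C_iff σ).2 hp
  have := (Ideal.span_singleton_prime hC.ne_zero).2 hC
  rw [span_C_X_eq_comap]
  exact Ideal.comap_isPrime _ _

theorem not_C_dvd_X {p : R} (hp : ¬IsUnit p) (i : σ) :
    ¬MvPolynomial.C p ∣ (MvPolynomial.X i : MvPolynomial σ R) := fun h ↦ by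
  have hcoeff := (MvPolynomial.C_dvd_iff_dvd_coeff _ _).1 h (Finsupp.single i 1)
  exact hp (isUnit_of_dvd_one (by simpa using hcoeff))

theorem X_notMem_span_C_X {p : R} (hp : ¬IsUnit p) {i j : σ} (hij : j ≠ i) :
    MvPolynomial.X j ∉ Ideal.span {(MvPolynomial.C p : MvPolynomial σ R), MvPolynomial.X i} := by
  classical
  rw [span_C_X_eq_comap, Ideal.mem_comap, Ideal.mem_span_singleton]
  simpa [hij] using not_C_dvd_X hp j

end MvPolynomial

theorem paperSquarefree_of_prime {S : Type*} [CommRing S] [IsDomain S] {c : S} (hc : Prime c) :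
    PaperSquarefree c := by
  intro P hP hP1 hcP
  have hprime : (Ideal.span {c}).IsPrime := (Ideal.span_singleton_prime hc.ne_zero).2 hc
  have hspan : Ideal.span {c} = P := by
    refine ((Ideal.span_singleton_le_iff_mem _).2 hcP).eq_or_lt.resolve_right fun hlt ↦ ?_
    have hbot : ⊥ < Ideal.span {c} :=
      bot_lt_iff_ne_bot.2 (Ideal.span_singleton_eq_bot.not.2 hc.ne_zero)
    have hheight : P.height = 1 := (PrimeSpectrum.height_eq_orderHeight ⟨P, hP⟩).trans hP1
    have h1 : 1 ≤ (Ideal.span {c}).height :=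
      le_add_self.trans (Ideal.height_add_one_le_of_lt_of_isPrime hbot)
    have h2 : (1 + 1 : ℕ∞) ≤ 1 := (add_le_add_left h1 1).trans
      (hheight ▸ Ideal.height_add_one_le_of_lt_of_isPrime hlt)
    exact absurd h2 (by decide)
  subst hspan
  rw [Ideal.map_span, Set.image_singleton]

section Localization

variable {A : Type*} (S : Type*) [CommRing A] [CommRing S] [Algebra A S] (M : Ideal A) [M.IsPrime]
  [IsLocalization.AtPrime S M]

theorem algebraMap_mem_map_iff_of_le {I : Ideal A} [I.IsPrime] (hIM : I ≤ M) {s : A} :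
    algebraMap A S s ∈ I.map (algebraMap A S) ↔ s ∈ I := by
  rw [← Ideal.mem_comap, ← Ideal.under_def, Ideal.under_map_of_isLocalizationAtPrime M hIM]

theorem algebraMap_dvd_iff_of_mem {p s : A} (hp : Prime p) (hpM : p ∈ M) :
    algebraMap A S p ∣ algebraMap A S s ↔ p ∣ s := by
  have := (Ideal.span_singleton_prime hp.ne_zero).2 hp
  rw [← Ideal.mem_span_singleton, ← Ideal.mem_span_singleton,
    ← algebraMap_mem_map_iff_of_le S M ((Ideal.span_singleton_le_iff_mem _).2 hpM),
    Ideal.map_span, Set.image_singleton]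

variable [IsDomain A]

theorem prime_algebraMap_of_mem {p : A} (hp : Prime p) (hpM : p ∈ M) :
    Prime (algebraMap A S p) := by
  have := (Ideal.span_singleton_prime hp.ne_zero).2 hp
  have hinj : Function.Injective (algebraMap A S) :=
    IsLocalization.injective S M.primeCompl_le_nonZeroDivisors
  rw [← Ideal.span_singleton_prime ((map_ne_zero_iff _ hinj).2 hp.ne_zero),
    ← Set.image_singleton, ← Ideal.map_span]
  exact Ideal.isPrime_map_of_isLocalizationAtPrime M ((Ideal.span_singleton_le_iff_mem _).2 hpM)

theorem IsPrimeTriple.map_algebraMap {a b c : A} (h : IsPrimeTriple a b c)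
    (hM : Ideal.span {a, b, c} ≤ M) :
    IsPrimeTriple (algebraMap A S a) (algebraMap A S b) (algebraMap A S c) := by
  have := h.isPrime_span_pair
  have := h.isPrime_span_triple
  have ha : a ∈ M := hM (Ideal.subset_span (by simp))
  have hab : Ideal.span {a, b} ≤ M :=
    (Ideal.span_mono (Set.insert_subset_insert (by simp))).trans hM
  have hpair : Ideal.span {algebraMap A S a, algebraMap A S b} =
      (Ideal.span {a, b}).map (algebraMap A S) := by
    rw [Ideal.map_span, Set.image_pair]
  have htriple : Ideal.span {algebraMap A S a, algebraMap A S b, algebraMap A S c} =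
      (Ideal.span {a, b, c}).map (algebraMap A S) := by
    simp only [Ideal.map_span, Set.image_insert_eq, Set.image_singleton]
  exact {
    prime := prime_algebraMap_of_mem S M h.prime ha
    not_dvd := (algebraMap_dvd_iff_of_mem S M h.prime ha).not.2 h.not_dvd
    isPrime_span_pair := hpair ▸ Ideal.isPrime_map_of_isLocalizationAtPrime M hab
    notMem_span_pair := by
      rw [hpair, algebraMap_mem_map_iff_of_le S M hab]
      exact h.notMem_span_pair
    isPrime_span_triple := htriple ▸ Ideal.isPrime_map_of_isLocalizationAtPrime M hM }

end Localization

namespace IsBicubic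

section IntegralClosure

variable {S L K : Type*} [CommRing S] [IsDomain S] [IsIntegrallyClosed S] [Field L] [CharZero L]
  [Field K] [CharZero K] [Algebra S L] [IsFractionRing S L] [Algebra L K] [Algebra S K]
  [IsScalarTower S L K] {P : CubicPair S} {ω μ : K}

theorem not_isCMRing_integralClosure [IsNoetherianRing S] (h : IsBicubic L P.f P.g ω μ)
    (hP : IsPrimeTriple 3 P.x P.y) (h3α : ¬3 ∣ P.α) (hα : P.α ∈ Ideal.span {3, P.x}) :
    ¬IsCMRing (integralClosure S K) := by
  have : FaithfulSMul S K := .trans S L K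
  exact CubicPair.Thirds.not_isCMRing hP hα (h.linearCombination_generators_surjective hP h3α)
    (h.ker_linearCombination_generators hP)

theorem hasFreeResLengthLE1_integralClosure (h : IsBicubic L P.f P.g ω μ)
    (hP : IsPrimeTriple 3 P.x P.y) (h3α : ¬3 ∣ P.α) :
    HasFreeResLengthLE1 S (integralClosure S K) :=
  hasFreeResLengthLE1_of_ker_eq_span_singleton (h.linearCombination_generators_surjective hP h3α)
    (h.ker_linearCombination_generators hP) (P.relationVector_ne_zero hP.prime.ne_zero)

theorem not_projective_integralClosure (h : IsBicubic L P.f P.g ω μ)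
    (hP : IsPrimeTriple 3 P.x P.y) (h3α : ¬3 ∣ P.α) :
    ¬Module.Projective S (integralClosure S K) :=
  not_projective_of_ker_eq_span_singleton (h.linearCombination_generators_surjective hP h3α)
    (h.ker_linearCombination_generators hP) (P.relationVector_ne_zero hP.prime.ne_zero)
    hP.isPrime_span_triple.ne_top P.relationVector_mem_span

end IntegralClosure

theorem of_isLocalizationAtPrime {A S L K : Type*} [CommRing A] [IsDomain A] [CommRing S]
    [Field L] [Field K] [Algebra A S] [Algebra L K] [Algebra S K] (M : Ideal A) [M.IsPrime]
    [IsLocalization.AtPrime S M] {f g : A} {ω μ : K} (hf : Prime f) (hg : Prime g) (hfM : f ∈ M)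
    (hgM : g ∈ M) (hfg : ¬f ∣ g) (hgf : ¬g ∣ f) (hω : ω ^ 3 = algebraMap S K (algebraMap A S f))
    (hμ : μ ^ 3 = algebraMap S K (algebraMap A S g)) (hgen : Algebra.adjoin L {ω, μ} = ⊤) :
    IsBicubic L (algebraMap A S f) (algebraMap A S g) ω μ where
  prime_left := prime_algebraMap_of_mem S M hf hfM
  prime_right := prime_algebraMap_of_mem S M hg hgM
  not_left_dvd_right := (algebraMap_dvd_iff_of_mem S M hf hfM).not.2 hfg
  not_right_dvd_left := (algebraMap_dvd_iff_of_mem S M hg hgM).not.2 hgf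
  pow_left := hω
  pow_right := hμ
  adjoin_eq_top := hgen

end IsBicubic

/-- The pair of `-5 * X ^ 3 + 9` and `-2 * Y ^ 3 + 9`. -/
noncomputable def mvPair : CubicPair (MvPolynomial (Fin 2) ℤ) where
  x := MvPolynomial.X 0
  y := MvPolynomial.X 1
  α := 3 - 2 * MvPolynomial.X 0 ^ 3
  β := 3 - MvPolynomial.X 1 ^ 3
  γ := MvPolynomial.X 0 ^ 3 + MvPolynomial.X 1 ^ 3 - MvPolynomial.X 0 ^ 3 * MvPolynomial.X 1 ^ 3
  relation := by ring

theorem mvPair_f : mvPair.f = -5 * MvPolynomial.X 0 ^ 3 + 9 := by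
  simp only [CubicPair.f, mvPair]
  ring

theorem mvPair_g : mvPair.g = -2 * MvPolynomial.X 1 ^ 3 + 9 := by
  simp only [CubicPair.g, mvPair]
  ring

theorem prime_mvPair_f : Prime mvPair.f := by
  have hirr := irreducible_C_mul_X_pow_sub_C Nat.prime_three (p := (5 : ℤ)) (a := -1) (b := -9)
    (by norm_num) (by norm_num) (by norm_num)
  convert prime_aeval_X (0 : Fin 2) hirr.prime using 1
  simp [mvPair_f, map_ofNat]

theorem prime_mvPair_g : Prime mvPair.g := by
  have hirr := irreducible_C_mul_X_pow_sub_C Nat.prime_three (p := (2 : ℤ)) (a := -1) (b := -9)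
    (by norm_num) (by norm_num) (by norm_num)
  convert prime_aeval_X (1 : Fin 2) hirr.prime using 1
  simp [mvPair_g, map_ofNat]

theorem not_mvPair_f_dvd_mvPair_g : ¬mvPair.f ∣ mvPair.g := by
  rintro ⟨q, hq⟩
  have h : (7 : ℤ) = 9 * MvPolynomial.aeval ![(0 : ℤ), 1] q := by
    simpa [mvPair_f, mvPair_g] using congrArg (MvPolynomial.aeval ![(0 : ℤ), 1]) hq
  lia

theorem not_mvPair_g_dvd_mvPair_f : ¬mvPair.g ∣ mvPair.f := by
  rintro ⟨q, hq⟩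
  have h : (4 : ℤ) = 9 * MvPolynomial.aeval ![(1 : ℤ), 0] q := by
    simpa [mvPair_f, mvPair_g] using congrArg (MvPolynomial.aeval ![(1 : ℤ), 0]) hq
  lia

theorem isPrimeTriple_mvPair [hM : mvIdeal.IsPrime] : IsPrimeTriple 3 mvPair.x mvPair.y where
  prime := (MvPolynomial.prime_C_iff (Fin 2)).2 Int.prime_three
  not_dvd := not_C_dvd_X Int.prime_three.not_isUnit 0
  isPrime_span_pair := isPrime_span_C_X Int.prime_three 0
  notMem_span_pair := X_notMem_span_C_X Int.prime_three.not_isUnit (by decide)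
  isPrime_span_triple := hM

theorem mvPair_α_mem_span : mvPair.α ∈ Ideal.span {3, mvPair.x} :=
  Ideal.mem_span_pair.2 ⟨1, -2 * mvPair.x ^ 2, by simp only [mvPair]; ring⟩

theorem not_three_dvd_mvPair_α : ¬3 ∣ mvPair.α := by
  rintro ⟨q, hq⟩
  have h : (1 : ℤ) = 3 * MvPolynomial.aeval ![(1 : ℤ), 0] q := by
    simpa [mvPair] using congrArg (MvPolynomial.aeval ![(1 : ℤ), 0]) hq
  lia

section Localization

variable (S : Type*) [CommRing S] [Algebra (MvPolynomial (Fin 2) ℤ) S]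

theorem map_mvPair_α_mem_span :
    (mvPair.map (algebraMap _ S)).α ∈ Ideal.span {3, (mvPair.map (algebraMap _ S)).x} := by
  have h := Ideal.mem_map_of_mem (algebraMap _ S) mvPair_α_mem_span
  rwa [Ideal.map_span, Set.image_pair, map_ofNat] at h

variable [mvIdeal.IsPrime] [IsLocalization.AtPrime S mvIdeal]

theorem isPrimeTriple_map_mvPair :
    IsPrimeTriple 3 (mvPair.map (algebraMap _ S)).x (mvPair.map (algebraMap _ S)).y := by
  rw [← map_ofNat (algebraMap (MvPolynomial (Fin 2) ℤ) S)]
  exact isPrimeTriple_mvPair.map_algebraMap S mvIdeal le_rfl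

theorem not_three_dvd_map_mvPair_α : ¬3 ∣ (mvPair.map (algebraMap _ S)).α := by
  rw [← map_ofNat (algebraMap (MvPolynomial (Fin 2) ℤ) S)]
  exact (algebraMap_dvd_iff_of_mem S mvIdeal isPrimeTriple_mvPair.prime
    (Ideal.subset_span (by simp))).not.2 not_three_dvd_mvPair_α

variable {S} {L K : Type*} [Field L] [Field K] [Algebra L K] [Algebra S K] {ω μ : K}

theorem isBicubic_map_mvPair (hω : ω ^ 3 = algebraMap S K (algebraMap _ S mvPair.f))
    (hμ : μ ^ 3 = algebraMap S K (algebraMap _ S mvPair.g))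
    (hgen : Algebra.adjoin L {ω, μ} = ⊤) :
    IsBicubic L (mvPair.map (algebraMap _ S)).f (mvPair.map (algebraMap _ S)).g ω μ := by
  rw [mvPair.map_f, mvPair.map_g]
  exact .of_isLocalizationAtPrime mvIdeal prime_mvPair_f prime_mvPair_g mvPair.f_mem_span
    mvPair.g_mem_span not_mvPair_f_dvd_mvPair_g not_mvPair_g_dvd_mvPair_f hω hμ hgen

end Localization

theorem stmt19 (hM : mvIdeal.IsPrime)
    {S : Type*} [CommRing S] [IsDomain S] [Algebra (MvPolynomial (Fin 2) ℤ) S]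
    [IsLocalization (mvIdeal.primeCompl (hp := hM)) S]
    {L : Type*} [Field L] [Algebra S L] [IsFractionRing S L]
    {K : Type*} [Field K] [Algebra L K] [Algebra S K] [IsScalarTower S L K]
    {ω μ : K}
    (hω : ω ^ 3 = algebraMap S K (algebraMap (MvPolynomial (Fin 2) ℤ) S (-5 * MvPolynomial.X 0 ^ 3 + 9)))
    (hμ : μ ^ 3 = algebraMap S K (algebraMap (MvPolynomial (Fin 2) ℤ) S (-2 * MvPolynomial.X 1 ^ 3 + 9)))
    (hKgen : Algebra.adjoin L ({ω, μ} : Set K) = ⊤) :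
    PaperSquarefree (algebraMap (MvPolynomial (Fin 2) ℤ) S (-5 * MvPolynomial.X 0 ^ 3 + 9)) ∧
    PaperSquarefree (algebraMap (MvPolynomial (Fin 2) ℤ) S (-2 * MvPolynomial.X 1 ^ 3 + 9)) ∧
    RingTheory.Sequence.IsRegular S [algebraMap (MvPolynomial (Fin 2) ℤ) S (-5 * MvPolynomial.X 0 ^ 3 + 9), algebraMap (MvPolynomial (Fin 2) ℤ) S (-2 * MvPolynomial.X 1 ^ 3 + 9)] ∧
    Module.finrank L K = 9 ∧
    ¬IsCMRing (integralClosure S K) ∧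
    HasFreeResLengthLE1 S (integralClosure S K) ∧
    ¬Module.Projective S (integralClosure S K) := by
  have : IsLocalization.AtPrime S mvIdeal := ‹_›
  have hle : mvIdeal.primeCompl ≤ nonZeroDivisors _ := mvIdeal.primeCompl_le_nonZeroDivisors
  have : IsIntegrallyClosed S := isIntegrallyClosed_of_isLocalization S mvIdeal.primeCompl hle
  have : IsNoetherianRing S := IsLocalization.isNoetherianRing mvIdeal.primeCompl S inferInstance
  have : CharZero S := charZero_of_injective_algebraMap (IsLocalization.injective S hle)
  have : CharZero L := charZero_of_injective_algebraMap (IsFractionRing.injective S L)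
  have : CharZero K := charZero_of_injective_algebraMap (algebraMap L K).injective
  rw [← mvPair_f] at hω ⊢
  rw [← mvPair_g] at hμ ⊢
  have h := isBicubic_map_mvPair hω hμ hKgen
  have hP := isPrimeTriple_map_mvPair S
  have h3α := not_three_dvd_map_mvPair_α S
  have htop := ne_top_of_le_ne_top hP.isPrime_span_triple.ne_top
    (Ideal.span_le.2 (Set.pair_subset (CubicPair.f_mem_span _) (CubicPair.g_mem_span _)))
  rw [← mvPair.map_f, ← mvPair.map_g]
  exact ⟨paperSquarefree_of_prime h.prime_left, paperSquarefree_of_prime h.prime_right,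
    isRegular_pair_of_prime h.prime_left h.not_left_dvd_right htop, h.finrank_eq_nine,
    h.not_isCMRing_integralClosure hP h3α (map_mvPair_α_mem_span S),
    h.hasFreeResLengthLE1_integralClosure hP h3α, h.not_projective_integralClosure hP h3α⟩
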